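/- arXiv:2401.14317 — 3 statements merged into one kernel-verified Lean document; each statement's English description precedes it below -/
import Mathlib

section
/- Let d ≥ 2 and ε ∈ (0,1). Let [k] index parts P_1, …, P_k of a partition of a finite ground set, with vectors v_{ij} ∈ ℝ^d for i ∈ [k], j ∈ P_i, and let x be nonnegative weights with Σ_{j∈P_i} x_{ij} = 1 for each i ∈ [k]. Suppose X = Σ_{i∈[k]} Σ_{j∈P_i} x_{ij}·v_{ij}v_{ij}ᵀ is positive definite and that for every pair (i,j) with 0 < x_{ij} < 1 one has v_{ij}ᵀ X⁻¹ v_{ij} ≤ ε²/(10·ln(d)). Then there exists a choice function σ with σ(i) ∈ P_i for every i such that Σ_{i=1}^k v_{iσ(i)}v_{iσ(i)}ᵀ ⪰ (1−ε)·X, and in particular λ_min(Σ_{i=1}^k v_{iσ(i)}v_{iσ(i)}ᵀ) ≥ (1−ε)·λ_min(X). -/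
open Matrix

/-- The smallest eigenvalue of a real symmetric matrix, characterized via the Loewner order. -/
noncomputable def lambdaMin {d : ℕ} (A : Matrix (Fin d) (Fin d) ℝ) : ℝ :=
  sSup {c : ℝ | (A - c • (1 : Matrix (Fin d) (Fin d) ℝ)).PosSemidef}

theorem Matrix.trace_mul_vecMulVec_self {n : Type*} [Fintype n] (A : Matrix n n ℝ) (w : n → ℝ) :
    (A * vecMulVec w w).trace = w ⬝ᵥ (A *ᵥ w) := by
  rw [mul_vecMulVec, trace_vecMulVec, dotProduct_comm]

theorem Matrix.dotProduct_mul_vecMulVec_mul_mulVec {n : Type*} [Fintype n]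
    (A B : Matrix n n ℝ) (w : n → ℝ) :
    w ⬝ᵥ ((A * vecMulVec w w * B) *ᵥ w) = (w ⬝ᵥ (A *ᵥ w)) * (w ⬝ᵥ (B *ᵥ w)) := by
  rw [← mulVec_mulVec, ← mulVec_mulVec, vecMulVec_mulVec, mulVec_smul, dotProduct_smul]
  simp

theorem Matrix.dotProduct_vecMulVec_self_mulVec {n : Type*} [Fintype n] (w z : n → ℝ) :
    z ⬝ᵥ (vecMulVec w w *ᵥ z) = (w ⬝ᵥ z) ^ 2 := by
  rw [vecMulVec_mulVec, dotProduct_smul, dotProduct_comm z w]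
  simp [sq]

theorem Matrix.posSemidef_one_sub_smul_sum {n : Type*} [DecidableEq n]
    {κ : Type*} [Fintype κ] {Y : κ → Matrix n n ℝ}
    {r : κ → ℝ} {s t : ℝ} (hs : 0 ≤ s) (hr : s * ∑ i, r i ≤ 1 - t)
    (hY : ∀ i, (r i • (1 : Matrix n n ℝ) - Y i).PosSemidef) :
    (1 - s • ∑ i, Y i - t • (1 : Matrix n n ℝ)).PosSemidef := by
  have e : 1 - s • ∑ i, Y i - t • (1 : Matrix n n ℝ) =
      (1 - t - s * ∑ i, r i) • (1 : Matrix n n ℝ) +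
        s • ∑ i, (r i • (1 : Matrix n n ℝ) - Y i) := by
    rw [Finset.sum_sub_distrib, ← Finset.sum_smul]
    module
  rw [e]
  exact (PosSemidef.one.smul (by linarith)).add
    ((posSemidef_sum _ fun i _ => hY i).smul hs)

theorem pow_succ_tangent_le {x y : ℝ} (hx : 0 ≤ x) (hy : 0 ≤ y) (m : ℕ) :
    y ^ (m + 1) + (m + 1) * y ^ m * (x - y) ≤ x ^ (m + 1) := by
  induction m with
  | zero => simp
  | succ m ih =>
    have h1 := mul_le_mul_of_nonneg_right ih hx
    have h2 : 0 ≤ (m + 1) * y ^ m * (x - y) ^ 2 := by positivity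
    have h3 : (y ^ (m + 1) + (m + 1) * y ^ m * (x - y)) * x =
        y ^ (m + 1 + 1) + (m + 1 + 1) * y ^ (m + 1) * (x - y) +
          (m + 1) * y ^ m * (x - y) ^ 2 := by ring
    rw [h3, ← pow_succ] at h1
    push_cast
    linarith

theorem natCast_le_one_add_pow {d N : ℕ} (hd : 0 < d) (hN : 0 < N) {s : ℝ}
    (hs : 5 / 3 * Real.log d ≤ N * s) (hN' : 5 / 2 * Real.log d ≤ N) : (d : ℝ) ≤ (1 + s) ^ N := by
  have hN0 : (0 : ℝ) < N := by exact_mod_cast hN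
  have hd0 : (0 : ℝ) < d := by exact_mod_cast hd
  have hL : 0 ≤ Real.log d := Real.log_natCast_nonneg d
  set y := Real.log d / N with hy
  have hy0 : 0 ≤ y := by positivity
  have hyN : N * y = Real.log d := by rw [hy]; field_simp
  have hy1 : y ≤ 2 / 5 := by rw [hy, div_le_iff₀ hN0]; linarith
  have hys : 5 / 3 * y ≤ s := by
    rw [← hyN] at hs
    exact le_of_mul_le_mul_left (by linarith) hN0
  have hexp : Real.exp y ≤ 1 + s := by
    have h1 := Real.one_sub_le_exp_neg y
    have h2 : Real.exp (-y) * Real.exp y = 1 := by rw [← Real.exp_add]; simp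
    have h3 := Real.exp_pos y
    have h4 : (1 - y) * Real.exp y ≤ 1 := (mul_le_mul_of_nonneg_right h1 h3.le).trans_eq h2
    have h5 : 1 ≤ (1 - y) * (1 + s) := by nlinarith
    exact le_of_mul_le_mul_left (h4.trans h5) (by linarith)
  calc (d : ℝ) = Real.exp y ^ N := by rw [← Real.exp_nat_mul, hyN, Real.exp_log hd0]
    _ ≤ (1 + s) ^ N := pow_le_pow_left₀ (Real.exp_pos y).le hexp N

section

variable {n : Type*} [Fintype n] [DecidableEq n]

theorem Matrix.PosSemidef.exists_orthogonal_diagonal_pow {A : Matrix n n ℝ} (hA : A.PosSemidef) :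
    ∃ (Q : Matrix n n ℝ) (l : n → ℝ), (∀ i, 0 ≤ l i) ∧ Qᵀ * Q = 1 ∧ Q * Qᵀ = 1 ∧
      ∀ m : ℕ, A ^ m = Q * diagonal (fun i => l i ^ m) * Qᵀ := by
  have hQ := hA.1.eigenvectorUnitary.2
  rw [mem_unitaryGroup_iff] at hQ
  have hQ' := hA.1.eigenvectorUnitary.2
  rw [mem_unitaryGroup_iff'] at hQ'
  set Q : Matrix n n ℝ := hA.1.eigenvectorUnitary.1
  have hst : star Q = Qᵀ := by
    rw [star_eq_conjTranspose, conjTranspose_eq_transpose_of_trivial]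
  rw [hst] at hQ hQ'
  have hl := hA.eigenvalues_nonneg
  have hspec : A = Q * diagonal hA.1.eigenvalues * Qᵀ := by
    have h := hA.1.spectral_theorem
    rw [Unitary.conjStarAlgAut_apply, hst] at h
    simpa using h
  clear_value Q
  generalize hA.1.eigenvalues = l at hl hspec
  refine ⟨Q, l, hl, hQ', hQ, fun m => ?_⟩
  induction m with
  | zero => simp [hQ]
  | succ m ih =>
    calc A ^ (m + 1) = Q * diagonal (fun i => l i ^ m) * Qᵀ * (Q * diagonal l * Qᵀ) := by
          rw [pow_succ, ih, ← hspec]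
      _ = Q * diagonal (fun i => l i ^ m) * (Qᵀ * Q) * diagonal l * Qᵀ := by
          simp only [Matrix.mul_assoc]
      _ = Q * diagonal (fun i => l i ^ (m + 1)) * Qᵀ := by
          rw [hQ', Matrix.mul_one, Matrix.mul_assoc Q, diagonal_mul_diagonal]
          simp only [pow_succ]

theorem Matrix.dotProduct_conj_diagonal_mulVec (Q : Matrix n n ℝ) (l w : n → ℝ) :
    w ⬝ᵥ ((Q * diagonal l * Qᵀ) *ᵥ w) = ∑ i, l i * ((Qᵀ *ᵥ w) i) ^ 2 := by
  rw [← mulVec_mulVec, ← mulVec_mulVec, dotProduct_mulVec, ← mulVec_transpose]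
  simp only [dotProduct, mulVec_diagonal]
  exact Finset.sum_congr rfl fun i _ => by ring

/-- The quadratic-form moments of powers of a positive semidefinite matrix are the moments of a
finitely supported measure on `[0, ∞)`. -/
theorem Matrix.PosSemidef.exists_moments {A : Matrix n n ℝ} (hA : A.PosSemidef) (w : n → ℝ) :
    ∃ l p : n → ℝ, (∀ i, 0 ≤ l i) ∧ (∀ i, 0 ≤ p i) ∧ ∑ i, p i = w ⬝ᵥ w ∧
      ∀ m : ℕ, w ⬝ᵥ ((A ^ m) *ᵥ w) = ∑ i, p i * l i ^ m := by
  obtain ⟨Q, l, hl, -, -, hQ⟩ := hA.exists_orthogonal_diagonal_pow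
  have hm : ∀ m : ℕ, w ⬝ᵥ ((A ^ m) *ᵥ w) = ∑ i, ((Qᵀ *ᵥ w) i) ^ 2 * l i ^ m := fun m => by
    rw [hQ, dotProduct_conj_diagonal_mulVec]
    exact Finset.sum_congr rfl fun i _ => mul_comm _ _
  refine ⟨l, fun i => ((Qᵀ *ᵥ w) i) ^ 2, hl, fun i => sq_nonneg _, ?_, hm⟩
  simpa using (hm 0).symm

theorem Matrix.PosSemidef.dotProduct_pow_mulVec_nonneg {A : Matrix n n ℝ} (hA : A.PosSemidef)
    (w : n → ℝ) (m : ℕ) : 0 ≤ w ⬝ᵥ ((A ^ m) *ᵥ w) := by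
  simpa using (hA.pow m).dotProduct_mulVec_nonneg w

theorem Matrix.PosSemidef.dotProduct_pow_mulVec_mul_le {A : Matrix n n ℝ} (hA : A.PosSemidef)
    (w : n → ℝ) (a b : ℕ) :
    (w ⬝ᵥ ((A ^ a) *ᵥ w)) * (w ⬝ᵥ ((A ^ b) *ᵥ w)) ≤ (w ⬝ᵥ w) * (w ⬝ᵥ ((A ^ (a + b)) *ᵥ w)) := by
  obtain ⟨l, p, hl, hp, hsum, hm⟩ := hA.exists_moments w
  rw [← hsum, hm, hm, hm]
  have key : 0 ≤ ∑ i, ∑ j, p i * p j * ((l i ^ a - l j ^ a) * (l i ^ b - l j ^ b)) := by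
    refine Finset.sum_nonneg fun i _ => Finset.sum_nonneg fun j _ =>
      mul_nonneg (mul_nonneg (hp i) (hp j)) ?_
    rcases le_total (l i) (l j) with h | h
    · exact mul_nonneg_of_nonpos_of_nonpos (sub_nonpos.2 (pow_le_pow_left₀ (hl i) h a))
        (sub_nonpos.2 (pow_le_pow_left₀ (hl i) h b))
    · exact mul_nonneg (sub_nonneg.2 (pow_le_pow_left₀ (hl j) h a))
        (sub_nonneg.2 (pow_le_pow_left₀ (hl j) h b))
  have expand : ∑ i, ∑ j, p i * p j * ((l i ^ a - l j ^ a) * (l i ^ b - l j ^ b)) =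
      2 * ((∑ i, p i) * ∑ i, p i * l i ^ (a + b)) -
      2 * ((∑ i, p i * l i ^ a) * ∑ i, p i * l i ^ b) := by
    have h1 : (∑ i, p i) * ∑ i, p i * l i ^ (a + b) =
      ∑ i, ∑ j, p i * (p j * l j ^ (a + b)) := Finset.sum_mul_sum ..
    have h2 : (∑ i, p i * l i ^ (a + b)) * (∑ i, p i) =
      ∑ i, ∑ j, p i * l i ^ (a + b) * p j := Finset.sum_mul_sum ..
    have h3 : (∑ i, p i * l i ^ a) * ∑ i, p i * l i ^ b =
      ∑ i, ∑ j, p i * l i ^ a * (p j * l j ^ b) := Finset.sum_mul_sum ..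
    have h4 : (∑ i, p i * l i ^ b) * ∑ i, p i * l i ^ a =
      ∑ i, ∑ j, p i * l i ^ b * (p j * l j ^ a) := Finset.sum_mul_sum ..
    have h5 : ∑ i, ∑ j, p i * p j * ((l i ^ a - l j ^ a) * (l i ^ b - l j ^ b)) =
        ∑ i, ∑ j, p i * (p j * l j ^ (a + b)) + ∑ i, ∑ j, p i * l i ^ (a + b) * p j -
        ∑ i, ∑ j, p i * l i ^ a * (p j * l j ^ b) -
        ∑ i, ∑ j, p i * l i ^ b * (p j * l j ^ a) := by
      simp only [← Finset.sum_add_distrib, ← Finset.sum_sub_distrib]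
      exact Finset.sum_congr rfl fun i _ => Finset.sum_congr rfl fun j _ => by ring
    rw [h5, ← h1, ← h2, ← h3, ← h4]
    ring
  linarith

theorem Matrix.PosSemidef.smul_dotProduct_pow_mulVec_le {A : Matrix n n ℝ} (hA : A.PosSemidef)
    {t : ℝ} (ht : (A - t • (1 : Matrix n n ℝ)).PosSemidef) (w : n → ℝ) (m : ℕ) :
    t * (w ⬝ᵥ ((A ^ m) *ᵥ w)) ≤ w ⬝ᵥ ((A ^ (m + 1)) *ᵥ w) := by
  obtain ⟨Q, l, hl, hQ1, hQ2, hQ⟩ := hA.exists_orthogonal_diagonal_pow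
  have hA1 : A = Q * diagonal l * Qᵀ := by simpa using hQ 1
  have hge : ∀ i, t ≤ l i := fun i => by
    have h := ht.conjTranspose_mul_mul_same Q
    rw [conjTranspose_eq_transpose_of_trivial] at h
    have e : Qᵀ * (A - t • (1 : Matrix n n ℝ)) * Q = diagonal (fun i => l i - t) := by
      calc Qᵀ * (A - t • (1 : Matrix n n ℝ)) * Q
          = (Qᵀ * Q) * diagonal l * (Qᵀ * Q) - t • (Qᵀ * Q) := by
            rw [hA1, Matrix.mul_sub, Matrix.sub_mul]
            simp [Matrix.mul_assoc]
        _ = _ := by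
            rw [hQ1]
            ext a b
            by_cases hab : a = b <;> simp [hab]
    rw [e, posSemidef_diagonal_iff] at h
    linarith [h i]
  rw [hQ, hQ, dotProduct_conj_diagonal_mulVec, dotProduct_conj_diagonal_mulVec, Finset.mul_sum]
  refine Finset.sum_le_sum fun i _ => ?_
  rw [pow_succ, ← mul_assoc]
  refine mul_le_mul_of_nonneg_right ?_ (sq_nonneg _)
  rw [mul_comm]
  exact mul_le_mul_of_nonneg_left (hge i) (pow_nonneg (hl i) m)

/-- Jensen's inequality for powers of a quadratic form at a unit vector. -/
theorem Matrix.PosSemidef.pow_dotProduct_mulVec_le {A : Matrix n n ℝ} (hA : A.PosSemidef)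
    {w : n → ℝ} (hw : w ⬝ᵥ w = 1) (m : ℕ) :
    (w ⬝ᵥ (A *ᵥ w)) ^ m ≤ w ⬝ᵥ ((A ^ m) *ᵥ w) := by
  obtain ⟨l, p, hl, hp, hsum, hm⟩ := hA.exists_moments w
  have h1 := hm 1
  rw [pow_one] at h1
  rw [h1, hm]
  simpa using Real.pow_arith_mean_le_arith_mean_pow Finset.univ p l (fun i _ => hp i)
    (hsum.trans hw) (fun i _ => hl i) m

/-- Klein's inequality for the convex function `A ↦ tr (A ^ (m + 1))`. -/
theorem Matrix.PosSemidef.trace_pow_tangent_le {A B : Matrix n n ℝ} (hA : A.PosSemidef)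
    (hB : B.PosSemidef) (m : ℕ) :
    (B ^ (m + 1)).trace + (m + 1) * (B ^ m * (A - B)).trace ≤ (A ^ (m + 1)).trace := by
  obtain ⟨Q, l, hl, hQ1, hQ2, hQ⟩ := hB.exists_orthogonal_diagonal_pow
  have hB1 : B = Q * diagonal l * Qᵀ := by simpa using hQ 1
  have hdiag : ∀ (C : Matrix n n ℝ) (i : n), (Qᵀ * C * Q) i i = Qᵀ i ⬝ᵥ (C *ᵥ Qᵀ i) := by
    intro C i
    rw [Matrix.mul_assoc]
    rfl
  have htr : ∀ C : Matrix n n ℝ, C.trace = ∑ i, Qᵀ i ⬝ᵥ (C *ᵥ Qᵀ i) := fun C => by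
    simp only [← hdiag]
    change _ = (Qᵀ * C * Q).trace
    rw [trace_mul_comm, ← Matrix.mul_assoc, hQ2, Matrix.one_mul]
  have hunit : ∀ i, Qᵀ i ⬝ᵥ Qᵀ i = 1 := fun i => by
    have := hdiag 1 i
    rw [Matrix.mul_one, hQ1, one_mulVec] at this
    simpa using this.symm
  have h1 : (B ^ (m + 1)).trace = ∑ i, l i ^ (m + 1) := by
    rw [hQ, trace_mul_comm, ← Matrix.mul_assoc, hQ1, Matrix.one_mul, trace_diagonal]
  have h2 : ∀ C : Matrix n n ℝ,
      (B ^ m * C).trace = ∑ i, l i ^ m * (Qᵀ i ⬝ᵥ (C *ᵥ Qᵀ i)) := fun C => by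
    rw [hQ, Matrix.mul_assoc, Matrix.mul_assoc, trace_mul_comm, Matrix.mul_assoc]
    simp only [trace, diag_apply, diagonal_mul, hdiag]
  have h3 : (B ^ m * (A - B)).trace = ∑ i, l i ^ m * (Qᵀ i ⬝ᵥ (A *ᵥ Qᵀ i) - l i) := by
    rw [Matrix.mul_sub, trace_sub, ← pow_succ, h1, h2, ← Finset.sum_sub_distrib]
    exact Finset.sum_congr rfl fun i _ => by ring
  rw [h1, h3, htr (A ^ (m + 1)), Finset.mul_sum, ← Finset.sum_add_distrib]
  refine Finset.sum_le_sum fun i _ => ?_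
  have h4 := hA.pow_dotProduct_mulVec_le (hunit i) (m + 1)
  have h5 := pow_succ_tangent_le (x := Qᵀ i ⬝ᵥ (A *ᵥ Qᵀ i))
    (by simpa using hA.dotProduct_mulVec_nonneg (Qᵀ i)) (hl i) m
  linarith

theorem Matrix.pow_eq_pow_add_sum (A B : Matrix n n ℝ) (m : ℕ) :
    A ^ m = B ^ m + ∑ j ∈ Finset.range m, B ^ j * (A - B) * A ^ (m - 1 - j) := by
  induction m with
  | zero => simp
  | succ m ih =>
    have e : ∑ j ∈ Finset.range m, B ^ j * (A - B) * A ^ (m - j) =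
        (∑ j ∈ Finset.range m, B ^ j * (A - B) * A ^ (m - 1 - j)) * A := by
      rw [Finset.sum_mul]
      refine Finset.sum_congr rfl fun j hj => ?_
      have : m - j = m - 1 - j + 1 := by have := Finset.mem_range.1 hj; omega
      rw [this, pow_succ, Matrix.mul_assoc _ _ A]
    rw [Finset.sum_range_succ, Nat.add_sub_cancel, e, Nat.sub_self, pow_zero, mul_one, pow_succ A]
    nth_rewrite 1 [ih]
    rw [pow_succ B]
    noncomm_ring

/-- A small rank-one downdate changes the quadratic form of the powers at the updating vector by a
factor close to one. -/
theorem Matrix.PosSemidef.mul_dotProduct_pow_mulVec_le_of_rankOne {K : Matrix n n ℝ}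
    {w : n → ℝ} {s t c : ℝ} (hs : 0 ≤ s) (ht : 0 < t) (hK : K.PosSemidef)
    (hKt : (K - t • (1 : Matrix n n ℝ)).PosSemidef)
    (hK' : (K - s • vecMulVec w w).PosSemidef) (m : ℕ)
    (hc : m * s * (w ⬝ᵥ w) ≤ (1 - c) * t) :
    c * (w ⬝ᵥ ((K ^ m) *ᵥ w)) ≤ w ⬝ᵥ (((K - s • vecMulVec w w) ^ m) *ᵥ w) := by
  set K' := K - s • vecMulVec w w with hKd
  have hdiff : K - K' = s • vecMulVec w w := by simp [hKd]
  have hrec : ∀ m : ℕ, w ⬝ᵥ ((K ^ m) *ᵥ w) = w ⬝ᵥ ((K' ^ m) *ᵥ w) +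
      ∑ j ∈ Finset.range m, s * ((w ⬝ᵥ ((K' ^ j) *ᵥ w)) *
        (w ⬝ᵥ ((K ^ (m - 1 - j)) *ᵥ w))) := fun m => by
    nth_rewrite 1 [pow_eq_pow_add_sum K K' m]
    rw [add_mulVec, dotProduct_add, sum_mulVec, dotProduct_sum]
    congr 1
    refine Finset.sum_congr rfl fun j _ => ?_
    rw [hdiff, mul_smul_comm, smul_mul_assoc, smul_mulVec, dotProduct_smul,
      dotProduct_mul_vecMulVec_mul_mulVec, smul_eq_mul]
  have hle : ∀ j, w ⬝ᵥ ((K' ^ j) *ᵥ w) ≤ w ⬝ᵥ ((K ^ j) *ᵥ w) := fun j => by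
    rw [hrec j]
    exact le_add_of_nonneg_right <| Finset.sum_nonneg fun i _ => mul_nonneg hs <|
      mul_nonneg (hK'.dotProduct_pow_mulVec_nonneg w i) (hK.dotProduct_pow_mulVec_nonneg w _)
  rcases m with _ | m
  · have h0 : 0 ≤ (1 - c) * t := by simpa using hc
    have h1 : c ≤ 1 := by linarith [nonneg_of_mul_nonneg_left h0 ht]
    have h2 : 0 ≤ w ⬝ᵥ w := by simpa using hK.dotProduct_pow_mulVec_nonneg w 0
    simpa using mul_le_of_le_one_left h2 h1
  have hsum : ∑ j ∈ Finset.range (m + 1), s * ((w ⬝ᵥ ((K' ^ j) *ᵥ w)) *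
      (w ⬝ᵥ ((K ^ (m + 1 - 1 - j)) *ᵥ w))) ≤
      (m + 1 : ℕ) * (s * ((w ⬝ᵥ w) * (w ⬝ᵥ ((K ^ m) *ᵥ w)))) := by
    refine (Finset.sum_le_card_nsmul _ _ (s * ((w ⬝ᵥ w) * (w ⬝ᵥ ((K ^ m) *ᵥ w)))) fun j hj =>
      mul_le_mul_of_nonneg_left ?_ hs).trans_eq (by rw [Finset.card_range, nsmul_eq_mul])
    have hj' : j + (m + 1 - 1 - j) = m := by have := Finset.mem_range.1 hj; omega
    have := hK.dotProduct_pow_mulVec_mul_le w j (m + 1 - 1 - j)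
    rw [hj'] at this
    exact (mul_le_mul_of_nonneg_right (hle j) (hK.dotProduct_pow_mulVec_nonneg w _)).trans this
  have h1 := hrec (m + 1)
  have h2 := hK.smul_dotProduct_pow_mulVec_le hKt w m
  have h3 := mul_le_mul_of_nonneg_right hc (hK.dotProduct_pow_mulVec_nonneg w m)
  have hw : 0 ≤ w ⬝ᵥ w := by simpa using hK.dotProduct_pow_mulVec_nonneg w 0
  have h4 : 0 ≤ 1 - c :=
    nonneg_of_mul_nonneg_left ((mul_nonneg (by positivity) hw).trans hc) ht
  have h5 := mul_le_mul_of_nonneg_left h2 h4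
  linarith
theorem Matrix.posSemidef_smul_one_sub_smul_vecMulVec {w : n → ℝ} {r c : ℝ}
    (hw : w ⬝ᵥ w ≤ r) (hc1 : c ≤ 1) :
    (r • (1 : Matrix n n ℝ) - c • vecMulVec w w).PosSemidef := by
  refine PosSemidef.of_dotProduct_mulVec_nonneg ?_ fun z => ?_
  · simp [IsHermitian, conjTranspose_eq_transpose_of_trivial]
  · have hcs : (w ⬝ᵥ z) ^ 2 ≤ (w ⬝ᵥ w) * (z ⬝ᵥ z) := by
      simpa [dotProduct, sq] using Finset.sum_mul_sq_le_sq_mul_sq Finset.univ w z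
    have hz : 0 ≤ z ⬝ᵥ z := Finset.sum_nonneg fun i _ => mul_self_nonneg (z i)
    rw [star_trivial, sub_mulVec, smul_mulVec, smul_mulVec, one_mulVec, dotProduct_sub,
      dotProduct_smul, dotProduct_smul, dotProduct_vecMulVec_self_mulVec, smul_eq_mul, smul_eq_mul]
    nlinarith [mul_le_mul_of_nonneg_right hw hz, mul_le_of_le_one_left (sq_nonneg (w ⬝ᵥ z)) hc1]

/-- One step of the method of conditional expectations: a random rank-one downdate can be
derandomized against a slightly shrunk downdate by the mean. -/
theorem Matrix.exists_trace_pow_sub_vecMulVec_le {ι : Type*} [Fintype ι] {w : ι → n → ℝ}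
    {x : ι → ℝ} (hx0 : ∀ j, 0 ≤ x j) (hx1 : ∑ j, x j = 1) {K : Matrix n n ℝ} {s t c : ℝ}
    (hs : 0 ≤ s) (ht : 0 < t) (hc1 : c ≤ 1) (hK : K.PosSemidef)
    (hKt : (K - t • (1 : Matrix n n ℝ)).PosSemidef)
    (hKw : ∀ j, (K - s • vecMulVec (w j) (w j)).PosSemidef)
    (hKM : (K - s • c • ∑ j, x j • vecMulVec (w j) (w j)).PosSemidef) (m : ℕ)
    (hfrac : ∀ j, 0 < x j → x j < 1 → m * s * (w j ⬝ᵥ w j) ≤ (1 - c) * t) :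
    ∃ j, ((K - s • vecMulVec (w j) (w j)) ^ (m + 1)).trace ≤
      ((K - s • c • ∑ j, x j • vecMulVec (w j) (w j)) ^ (m + 1)).trace := by
  by_cases hdet : ∃ j, x j = 1
  · obtain ⟨j, hj⟩ := hdet
    refine ⟨j, ?_⟩
    have hzero : ∀ i, i ≠ j → x i = 0 := by
      classical
      intro i hi
      have h := Finset.sum_erase_add Finset.univ x (Finset.mem_univ j)
      rw [hx1, hj] at h
      exact (Finset.sum_eq_zero_iff_of_nonneg fun i _ => hx0 i).1 (by linarith) i (by simp [hi])
    have hM : ∑ i, x i • vecMulVec (w i) (w i) = vecMulVec (w j) (w j) := by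
      rw [Finset.sum_eq_single j (fun i _ hi => by rw [hzero i hi, zero_smul]) (by simp), hj,
        one_smul]
    rw [hM] at hKM ⊢
    have h := hKM.trace_pow_tangent_le (hKw j) m
    have e : K - s • c • vecMulVec (w j) (w j) - (K - s • vecMulVec (w j) (w j)) =
        (s * (1 - c)) • vecMulVec (w j) (w j) := by module
    rw [e, mul_smul_comm, trace_smul, trace_mul_vecMulVec_self, smul_eq_mul] at h
    have h1 := (hKw j).dotProduct_pow_mulVec_nonneg (w j) m
    have h2 : 0 ≤ (m + 1) * (s * (1 - c) *
        w j ⬝ᵥ (((K - s • vecMulVec (w j) (w j)) ^ m) *ᵥ w j)) := by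
      have := sub_nonneg.2 hc1
      positivity
    linarith
  · have hlt : ∀ j, x j < 1 := fun j => lt_of_le_of_ne
      (hx1 ▸ Finset.single_le_sum (fun i _ => hx0 i) (Finset.mem_univ j)) fun h => hdet ⟨j, h⟩
    by_contra! hcon
    set T := ((K - s • c • ∑ j, x j • vecMulVec (w j) (w j)) ^ (m + 1)).trace
    have hj : ∀ j, x j * ((K - s • vecMulVec (w j) (w j)) ^ (m + 1)).trace ≤
        x j * ((K ^ (m + 1)).trace - (m + 1) * (s * (c * (w j ⬝ᵥ ((K ^ m) *ᵥ w j))))) := by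
      intro j
      rcases (hx0 j).eq_or_lt with h0 | h0
      · simp [← h0]
      refine mul_le_mul_of_nonneg_left ?_ (hx0 j)
      have h := hK.trace_pow_tangent_le (hKw j) m
      rw [sub_sub_cancel, mul_smul_comm, trace_smul, trace_mul_vecMulVec_self, smul_eq_mul] at h
      have h1 := hK.mul_dotProduct_pow_mulVec_le_of_rankOne hs ht hKt (hKw j) m
        (hfrac j h0 (hlt j))
      have h2 : (m + 1 : ℝ) * (s * (c * (w j ⬝ᵥ ((K ^ m) *ᵥ w j)))) ≤ (m + 1) *
        (s * (w j ⬝ᵥ (((K - s • vecMulVec (w j) (w j)) ^ m) *ᵥ w j))) := by gcongr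
      linarith
    have hsum := Finset.sum_le_sum fun j (_ : j ∈ Finset.univ) => hj j
    have hKlein := hKM.trace_pow_tangent_le hK m
    have e : (K ^ m * (K - s • c • ∑ j, x j • vecMulVec (w j) (w j) - K)).trace =
        -(s * (c * ∑ j, x j * (w j ⬝ᵥ ((K ^ m) *ᵥ w j)))) := by
      rw [sub_sub_cancel_left, Matrix.mul_neg, trace_neg, mul_smul_comm, mul_smul_comm,
        Finset.mul_sum, trace_smul, trace_smul, trace_sum]
      simp only [mul_smul_comm, trace_smul, trace_mul_vecMulVec_self, smul_eq_mul]
    rw [e] at hKlein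
    have hrhs : ∑ j, x j * ((K ^ (m + 1)).trace -
        (m + 1) * (s * (c * (w j ⬝ᵥ ((K ^ m) *ᵥ w j))))) =
        (K ^ (m + 1)).trace + (m + 1) * -(s * (c * ∑ j, x j * (w j ⬝ᵥ ((K ^ m) *ᵥ w j)))) := by
      simp only [mul_sub, Finset.sum_sub_distrib, ← Finset.sum_mul, hx1, one_mul, Finset.mul_sum,
        mul_neg, ← sub_eq_add_neg]
      congr 1
      exact Finset.sum_congr rfl fun j _ => by ring
    rw [hrhs] at hsum
    have hpos : ∃ j, 0 < x j := by
      by_contra! h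
      have := Finset.sum_nonpos fun j (_ : j ∈ Finset.univ) => h j
      linarith
    obtain ⟨j, hjpos⟩ := hpos
    have hstrict : ∑ j, x j * T < ∑ j, x j * ((K - s • vecMulVec (w j) (w j)) ^ (m + 1)).trace :=
      Finset.sum_lt_sum (fun i _ => mul_le_mul_of_nonneg_left (hcon i).le (hx0 i))
        ⟨j, Finset.mem_univ j, mul_lt_mul_of_pos_left (hcon j) hjpos⟩
    rw [← Finset.sum_mul, hx1, one_mul] at hstrict
    linarith

theorem Matrix.exists_choice_trace_pow_le {κ : Type*} [Fintype κ] {P : κ → Type*}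
    [∀ i, Fintype (P i)] {w : (i : κ) → P i → n → ℝ} {x : (i : κ) → P i → ℝ}
    (hx0 : ∀ i j, 0 ≤ x i j) (hx1 : ∀ i, ∑ j, x i j = 1) {r : κ → ℝ} {s t c : ℝ}
    (hs : 0 ≤ s) (ht : 0 < t) (hc1 : c ≤ 1) (hr : ∀ i j, w i j ⬝ᵥ w i j ≤ r i)
    (hsr : s * ∑ i, r i ≤ 1 - t) (m : ℕ)
    (hfrac : ∀ i j, 0 < x i j → x i j < 1 → m * s * (w i j ⬝ᵥ w i j) ≤ (1 - c) * t) :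
    ∃ σ : (i : κ) → P i,
      ((1 - s • ∑ i, vecMulVec (w i (σ i)) (w i (σ i))) ^ (m + 1)).trace ≤
      ((1 - s • ∑ i, c • ∑ j, x i j • vecMulVec (w i j) (w i j)) ^ (m + 1)).trace := by
  classical
  have hne : ∀ i, Nonempty (P i) := fun i => by
    by_contra h
    rw [not_nonempty_iff] at h
    simpa using hx1 i
  set M : κ → Matrix n n ℝ := fun i => c • ∑ j, x i j • vecMulVec (w i j) (w i j) with hM
  have hrM : ∀ i, (r i • (1 : Matrix n n ℝ) - M i).PosSemidef := fun i => by
    have e : r i • (1 : Matrix n n ℝ) - M i =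
        ∑ j, x i j • (r i • (1 : Matrix n n ℝ) - c • vecMulVec (w i j) (w i j)) := by
      simp only [smul_sub, Finset.sum_sub_distrib, ← Finset.sum_smul, hx1, one_smul, hM,
        Finset.smul_sum]
      simp only [smul_comm c]
    rw [e]
    exact posSemidef_sum _ fun j _ =>
      (posSemidef_smul_one_sub_smul_vecMulVec (hr i j) hc1).smul (hx0 i j)
  have hrw : ∀ i j, (r i • (1 : Matrix n n ℝ) - vecMulVec (w i j) (w i j)).PosSemidef :=
    fun i j => by
      simpa using posSemidef_smul_one_sub_smul_vecMulVec (hr i j) le_rfl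
  have hr0 : ∀ i, (r i • (1 : Matrix n n ℝ) - 0).PosSemidef := fun i => by
    obtain ⟨j⟩ := hne i
    have hw : 0 ≤ w i j ⬝ᵥ w i j := Finset.sum_nonneg fun l _ => mul_self_nonneg (w i j l)
    simpa using PosSemidef.one.smul (hw.trans (hr i j))
  suffices h : ∀ S : Finset κ, ∃ σ : (i : κ) → P i,
      ((1 - s • ∑ i, (if i ∈ S then vecMulVec (w i (σ i)) (w i (σ i)) else M i)) ^
        (m + 1)).trace ≤ ((1 - s • ∑ i, M i) ^ (m + 1)).trace by
    simpa using h Finset.univ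
  intro S
  induction S using Finset.induction_on with
  | empty => exact ⟨fun i => Classical.choice (hne i), by simp⟩
  | insert a S ha ih =>
    obtain ⟨σ, hσ⟩ := ih
    set Y : κ → Matrix n n ℝ := fun i =>
      if i ∈ S then vecMulVec (w i (σ i)) (w i (σ i)) else M i with hY
    have hYa : Y a = M a := by simp [hY, ha]
    have hsumY : ∀ B : Matrix n n ℝ, 1 - s • ∑ i, Function.update Y a B i =
        1 - s • ∑ i, Function.update Y a 0 i - s • B := fun B => by
      rw [Finset.sum_update_of_mem (Finset.mem_univ a),
        Finset.sum_update_of_mem (Finset.mem_univ a)]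
      module
    have hbd : ∀ B : Matrix n n ℝ, (r a • (1 : Matrix n n ℝ) - B).PosSemidef →
        (1 - s • ∑ i, Function.update Y a B i - t • (1 : Matrix n n ℝ)).PosSemidef := by
      refine fun B hB => posSemidef_one_sub_smul_sum hs hsr fun i => ?_
      rcases eq_or_ne i a with rfl | hi
      · simpa using hB
      · rw [Function.update_of_ne hi]
        by_cases hiS : i ∈ S
        · simpa [hY, hiS] using hrw i (σ i)
        · simpa [hY, hiS] using hrM i
    have hpsd : ∀ B : Matrix n n ℝ, (r a • (1 : Matrix n n ℝ) - B).PosSemidef →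
        (1 - s • ∑ i, Function.update Y a B i).PosSemidef := fun B hB => by
      simpa using (hbd B hB).add (PosSemidef.one.smul ht.le)
    obtain ⟨j, hj⟩ := exists_trace_pow_sub_vecMulVec_le (hx0 a) (hx1 a) hs ht hc1
      (hpsd 0 (hr0 a)) (hbd 0 (hr0 a)) (fun j => hsumY (vecMulVec (w a j) (w a j)) ▸
        hpsd _ (hrw a j)) (hsumY (M a) ▸ hpsd _ (hrM a)) m (hfrac a)
    refine ⟨Function.update σ a j, ?_⟩
    have e : (fun i => if i ∈ insert a S then
        vecMulVec (w i (Function.update σ a j i)) (w i (Function.update σ a j i)) else M i) =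
        Function.update Y a (vecMulVec (w a j) (w a j)) := by
      funext i
      rcases eq_or_ne i a with rfl | hi
      · simp
      · simp [hi, hY]
    rw [← hsumY, ← hsumY (M a), ← hYa, Function.update_eq_self] at hj
    rw [Finset.sum_congr rfl fun i _ => congrFun e i]
    exact hj.trans hσ

theorem Matrix.PosSemidef.smul_one_sub_of_trace_pow_le {A : Matrix n n ℝ} (hA : A.PosSemidef)
    {b : ℝ} (hb : 0 ≤ b) (m : ℕ) (h : (A ^ (m + 1)).trace ≤ b ^ (m + 1)) :
    (b • (1 : Matrix n n ℝ) - A).PosSemidef := by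
  obtain ⟨Q, l, hl, hQ1, hQ2, hQ⟩ := hA.exists_orthogonal_diagonal_pow
  have hA1 : A = Q * diagonal l * Qᵀ := by simpa using hQ 1
  rw [hQ, trace_mul_comm, ← Matrix.mul_assoc, hQ1, Matrix.one_mul, trace_diagonal] at h
  have hlb : ∀ i, l i ≤ b := fun i => by
    have := Finset.single_le_sum (f := fun i => l i ^ (m + 1))
      (fun i _ => pow_nonneg (hl i) (m + 1)) (Finset.mem_univ i)
    exact le_of_pow_le_pow_left₀ (Nat.succ_ne_zero m) hb (this.trans h)
  have e : b • (1 : Matrix n n ℝ) - A = Q * diagonal (fun i => b - l i) * Qᴴ := by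
    have : diagonal (fun i => b - l i) = b • (1 : Matrix n n ℝ) - diagonal l := by
      ext i j
      by_cases hij : i = j <;> simp [hij]
    rw [this, conjTranspose_eq_transpose_of_trivial, Matrix.mul_sub, Matrix.sub_mul, ← hA1,
      mul_smul_comm, smul_mul_assoc, Matrix.mul_one, hQ2]
  rw [e]
  exact (PosSemidef.diagonal fun i => sub_nonneg.2 (hlb i)).mul_mul_conjTranspose_same Q

/-- Partition rounding in isotropic position. -/
theorem Matrix.exists_choice_sum_vecMulVec_of_isotropic {κ : Type*} [Fintype κ] {P : κ → Type*}
    [∀ i, Fintype (P i)] {w : (i : κ) → P i → n → ℝ} {x : (i : κ) → P i → ℝ}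
    (hn : 2 ≤ Fintype.card n) {ε : ℝ} (hε0 : 0 < ε) (hε1 : ε < 1)
    (hx0 : ∀ i j, 0 ≤ x i j) (hx1 : ∀ i, ∑ j, x i j = 1)
    (hI : ∑ i, ∑ j, x i j • vecMulVec (w i j) (w i j) = 1)
    (hshort : ∀ i j, 0 < x i j → x i j < 1 →
      w i j ⬝ᵥ w i j ≤ ε ^ 2 / (10 * Real.log (Fintype.card n))) :
    ∃ σ : (i : κ) → P i,
      ((∑ i, vecMulVec (w i (σ i)) (w i (σ i))) - (1 - ε) • (1 : Matrix n n ℝ)).PosSemidef := by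
  set L := Real.log (Fintype.card n)
  have hL : 0 < L := Real.log_pos (by exact_mod_cast hn)
  have hw0 : ∀ i j, 0 ≤ w i j ⬝ᵥ w i j := fun i j =>
    Finset.sum_nonneg fun l _ => mul_self_nonneg (w i j l)
  set r : κ → ℝ := fun i => ∑ j, w i j ⬝ᵥ w i j with hr
  have hr0 : 0 ≤ ∑ i, r i := Finset.sum_nonneg fun i _ => Finset.sum_nonneg fun j _ => hw0 i j
  have hwr : ∀ i j, w i j ⬝ᵥ w i j ≤ r i := fun i j =>
    Finset.single_le_sum (f := fun j => w i j ⬝ᵥ w i j) (fun j _ => hw0 i j) (Finset.mem_univ j)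
  obtain ⟨m, hm⟩ := exists_nat_ge (10 * L * (∑ i, r i + 1) / ε)
  rw [div_le_iff₀ hε0] at hm
  have hm0 : (0 : ℝ) < m + 1 := by positivity
  set s := 10 * L / (3 * ε) / (m + 1) with hs
  have hs0 : 0 < s := by positivity
  have hsm : (m + 1) * s = 10 * L / (3 * ε) := by rw [hs]; field_simp
  have hsm' : (m + 1) * s * ε = 10 / 3 * L := by rw [hsm]; field_simp
  have hsr : s * (∑ i, r i + 1) ≤ 1 / 3 := by
    have h1 : (m + 1) * ε * (s * (∑ i, r i + 1)) ≤ (m + 1) * ε * (1 / 3) := by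
      calc (m + 1) * ε * (s * (∑ i, r i + 1)) = (m + 1) * s * ε * (∑ i, r i + 1) := by ring
        _ ≤ _ := by rw [hsm']; linarith
    exact le_of_mul_le_mul_left h1 (by positivity)
  have hsr' : s * ∑ i, r i ≤ 1 - 2 / 3 := by linarith
  have hs1 : s ≤ 1 / 3 := by linarith [mul_nonneg hs0.le hr0]
  obtain ⟨σ, hσ⟩ := exists_choice_trace_pow_le hx0 hx1 (r := r) (s := s) (t := 2 / 3)
    (c := 1 - ε / 2) hs0.le (by norm_num) (by linarith) hwr hsr' m
    fun i j h0 h1 => by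
      have h2 := hshort i j h0 h1
      rw [le_div_iff₀ (by positivity)] at h2
      have h3 : (m + 1) * s * (w i j ⬝ᵥ w i j) ≤ ε / 3 := by
        rw [hsm, div_mul_eq_mul_div, div_le_iff₀ (by positivity)]
        linarith
      linarith [mul_nonneg hs0.le (hw0 i j)]
  refine ⟨σ, ?_⟩
  have hK : (1 - s • ∑ i, vecMulVec (w i (σ i)) (w i (σ i))).PosSemidef := by
    have h := posSemidef_one_sub_smul_sum hs0.le hsr' fun i => by
      simpa using posSemidef_smul_one_sub_smul_vecMulVec (hwr i (σ i)) le_rfl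
    simpa using h.add (PosSemidef.one.smul (show (0 : ℝ) ≤ 2 / 3 by norm_num))
  have hb : (1 - s * (1 - ε / 2)) * (1 + s * ε / 2) ≤ 1 - s * (1 - ε) := by
    have : 0 ≤ s * (1 - ε / 2) * (s * ε / 2) := by
      have : 0 ≤ 1 - ε / 2 := by linarith
      positivity
    nlinarith
  have hsc : 0 ≤ 1 - s * (1 - ε / 2) := by nlinarith
  have hd : (Fintype.card n : ℝ) ≤ (1 + s * ε / 2) ^ (m + 1) := by
    refine natCast_le_one_add_pow (by omega) (Nat.succ_pos m) ?_ ?_ <;> push_cast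
    · linarith
    · nlinarith [mul_nonneg hL.le hr0]
  have hfin := hK.smul_one_sub_of_trace_pow_le (b := 1 - s * (1 - ε)) (by nlinarith) m <| by
    refine hσ.trans ?_
    rw [← Finset.smul_sum, hI]
    have e : 1 - s • (1 - ε / 2) • (1 : Matrix n n ℝ) =
        (1 - s * (1 - ε / 2)) • (1 : Matrix n n ℝ) := by module
    rw [e, smul_pow, one_pow, trace_smul, trace_one, smul_eq_mul]
    calc (1 - s * (1 - ε / 2)) ^ (m + 1) * (Fintype.card n : ℝ)
        ≤ (1 - s * (1 - ε / 2)) ^ (m + 1) * (1 + s * ε / 2) ^ (m + 1) := by gcongr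
      _ = ((1 - s * (1 - ε / 2)) * (1 + s * ε / 2)) ^ (m + 1) := (mul_pow ..).symm
      _ ≤ _ := pow_le_pow_left₀ (mul_nonneg hsc (by positivity)) hb _
  have h := hfin.smul (inv_nonneg.2 hs0.le)
  convert h using 1
  set S := ∑ i, vecMulVec (w i (σ i)) (w i (σ i))
  have e : (1 - s * (1 - ε)) • (1 : Matrix n n ℝ) - (1 - s • S) =
      s • (S - (1 - ε) • (1 : Matrix n n ℝ)) := by module
  rw [e, smul_smul, inv_mul_cancel₀ hs0.ne', one_smul]

end

theorem lambdaMin_mono_smul {d : ℕ} (hd : 0 < d) {A B : Matrix (Fin d) (Fin d) ℝ} {c : ℝ}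
    (hc : 0 < c) (hA : A.PosSemidef) (h : (B - c • A).PosSemidef) :
    c * lambdaMin A ≤ lambdaMin B := by
  rw [← le_div_iff₀' hc]
  refine csSup_le ⟨0, by simpa using hA⟩ fun t ht => ?_
  rw [le_div_iff₀' hc]
  refine le_csSup ⟨B ⟨0, hd⟩ ⟨0, hd⟩, fun u hu => ?_⟩ ?_
  · have := PosSemidef.diag_nonneg hu (i := ⟨0, hd⟩)
    simpa using this
  · have := h.add (PosSemidef.smul ht hc.le)
    change (B - (c * t) • (1 : Matrix (Fin d) (Fin d) ℝ)).PosSemidef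
    convert this using 1
    module

theorem Matrix.PosDef.exists_isUnit_transpose_mul_self {n : Type*} [Fintype n] [DecidableEq n]
    {X : Matrix n n ℝ} (hX : X.PosDef) : ∃ B : Matrix n n ℝ, IsUnit B.det ∧ X = Bᵀ * B := by
  obtain ⟨Q, l, hl, hQ1, hQ2, hQ⟩ := hX.posSemidef.exists_orthogonal_diagonal_pow
  have hfac : X = (diagonal (fun i => √(l i)) * Qᵀ)ᵀ * (diagonal (fun i => √(l i)) * Qᵀ) := by
    have h1 : X = Q * diagonal l * Qᵀ := by simpa using hQ 1
    rw [transpose_mul, transpose_transpose, diagonal_transpose, Matrix.mul_assoc,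
      ← Matrix.mul_assoc (diagonal _), diagonal_mul_diagonal, ← Matrix.mul_assoc]
    simpa only [Real.mul_self_sqrt (hl _)] using h1
  refine ⟨_, ?_, hfac⟩
  have hdet := hX.det_pos.ne'
  rw [hfac, det_mul, det_transpose] at hdet
  exact isUnit_iff_ne_zero.2 (left_ne_zero_of_mul hdet)

/-- If `X = ∑ᵢ ∑_{j∈Pᵢ} xᵢⱼ vᵢⱼvᵢⱼᵀ ≻ 0` where `x` is nonnegative with
`∑_{j∈Pᵢ} xᵢⱼ = 1` for each part, and every fractionally chosen vector satisfies
`vᵢⱼᵀ X⁻¹ vᵢⱼ ≤ ε²/(10 ln d)`, then there is a choice function `σ` with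
`∑ᵢ v_{iσ(i)}v_{iσ(i)}ᵀ ⪰ (1−ε)X`, and in particular
`λ_min(∑ᵢ v_{iσ(i)}v_{iσ(i)}ᵀ) ≥ (1−ε) λ_min(X)`. -/
theorem partition_rounding_exists {d k : ℕ} (hd : 2 ≤ d)
    {ε : ℝ} (hε0 : 0 < ε) (hε1 : ε < 1)
    {P : Fin k → Type*} [∀ i, Fintype (P i)]
    (v : (i : Fin k) → P i → Fin d → ℝ)
    (x : (i : Fin k) → P i → ℝ)
    (hx0 : ∀ i j, 0 ≤ x i j) (hx1 : ∀ i, ∑ j, x i j = 1)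
    (X : Matrix (Fin d) (Fin d) ℝ)
    (hX : X = ∑ i, ∑ j, x i j • vecMulVec (v i j) (v i j))
    (hXpd : X.PosDef)
    (hshort : ∀ i j, 0 < x i j → x i j < 1 →
      v i j ⬝ᵥ (X⁻¹ *ᵥ v i j) ≤ ε ^ 2 / (10 * Real.log d)) :
    ∃ σ : (i : Fin k) → P i,
      ((∑ i, vecMulVec (v i (σ i)) (v i (σ i))) - (1 - ε) • X).PosSemidef ∧
      (1 - ε) * lambdaMin X ≤ lambdaMin (∑ i, vecMulVec (v i (σ i)) (v i (σ i))) := by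
  obtain ⟨B, hB, hXB⟩ := hXpd.exists_isUnit_transpose_mul_self
  have hBT : IsUnit Bᵀ.det := by rwa [det_transpose]
  have hconj : ∀ u : Fin d → ℝ,
      Bᵀ * vecMulVec ((Bᵀ)⁻¹ *ᵥ u) ((Bᵀ)⁻¹ *ᵥ u) * B = vecMulVec u u := fun u => by
    rw [mul_vecMulVec, vecMulVec_mul, mulVec_mulVec, mul_nonsing_inv _ hBT, one_mulVec,
      ← mulVec_transpose, mulVec_mulVec, mul_nonsing_inv _ hBT, one_mulVec]
  have hnorm : ∀ u : Fin d → ℝ, ((Bᵀ)⁻¹ *ᵥ u) ⬝ᵥ ((Bᵀ)⁻¹ *ᵥ u) = u ⬝ᵥ (X⁻¹ *ᵥ u) := fun u => by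
    rw [hXB, Matrix.mul_inv_rev, ← mulVec_mulVec, dotProduct_mulVec u, ← mulVec_transpose,
      transpose_nonsing_inv]
  have hI : ∑ i, ∑ j, x i j • vecMulVec ((Bᵀ)⁻¹ *ᵥ v i j) ((Bᵀ)⁻¹ *ᵥ v i j) = 1 := by
    have h : Bᵀ * (∑ i, ∑ j, x i j • vecMulVec ((Bᵀ)⁻¹ *ᵥ v i j) ((Bᵀ)⁻¹ *ᵥ v i j)) * B =
        Bᵀ * 1 * B := by
      rw [Matrix.mul_one, ← hXB]
      refine Eq.trans ?_ hX.symm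
      simp only [Matrix.mul_sum, Matrix.sum_mul, mul_smul_comm, smul_mul_assoc, hconj]
    have hBu := (isUnit_iff_isUnit_det B).2 hB
    have hBTu := (isUnit_iff_isUnit_det Bᵀ).2 hBT
    exact hBTu.mul_left_cancel (hBu.mul_right_cancel h)
  obtain ⟨σ, hσ⟩ := exists_choice_sum_vecMulVec_of_isotropic
    (w := fun i j => (Bᵀ)⁻¹ *ᵥ v i j) (by simpa using hd) hε0 hε1 hx0 hx1 hI
    fun i j h0 h1 => by simpa [hnorm] using hshort i j h0 h1
  have hloew : ((∑ i, vecMulVec (v i (σ i)) (v i (σ i))) - (1 - ε) • X).PosSemidef := by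
    have h := hσ.conjTranspose_mul_mul_same B
    rw [conjTranspose_eq_transpose_of_trivial, Matrix.mul_sub, Matrix.sub_mul, Matrix.mul_sum,
      Matrix.sum_mul, mul_smul_comm, smul_mul_assoc, Matrix.mul_one, ← hXB] at h
    simpa only [hconj] using h
  exact ⟨σ, hloew, lambdaMin_mono_smul (by omega) (by linarith) hXpd.posSemidef hloew⟩
end

section
/- Let d ≥ 2, ε ∈ (0,1), and let [k] index parts P_1, …, P_k of a partition of a finite ground set E with vectors v_{ij} ∈ ℝ^d for (i,j) ∈ E. Let OPT = max over choice functions σ (with σ(i) ∈ P_i) of λ_min(Σ_{i=1}^k v_{iσ(i)}v_{iσ(i)}ᵀ), and assume OPT > 0. Then there exists a set S ⊆ E with |S| ≤ 10·d·ln(d)/ε² + d such that A_S = Σ_{(i,j)∈S} v_{ij}v_{ij}ᵀ is invertible and, letting CP(S) denote the supremum of λ_min(Σ_{(i,j)∈E} x_{ij}·v_{ij}v_{ij}ᵀ) over all nonnegative weights x with Σ_{j∈P_i} x_{ij} = 1 for each i, x_{ij} = 1 for all (i,j) ∈ S, and x_{ij} = 0 for all (i,j) ∉ S with v_{ij}ᵀA_S⁻¹v_{ij}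 > ε²/(10·ln(d)), one has OPT ≤ CP(S) ≤ OPT/(1−ε). -/
open Matrix

/-- The value `CP(S)` of the convex program for the minimum eigenvalue problem over a
partitioned ground set, with the vectors indexed by `S` forced in and the vectors that are
"long" with respect to `A_S = ∑_{p∈S} v_p v_pᵀ` forced out: the supremum of
`λ_min(∑ᵢⱼ xᵢⱼ vᵢⱼvᵢⱼᵀ)` over all nonnegative `x` with `∑_{j∈Pᵢ} xᵢⱼ = 1` for each part `i`,
`xᵢⱼ = 1` on `S`, and `xᵢⱼ = 0` whenever `(i,j) ∉ S` and `vᵢⱼᵀ A_S⁻¹ vᵢⱼ > ε²/(10 ln d)`. -/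
noncomputable def CPval {d k : ℕ} {P : Fin k → Type*} [∀ i, Fintype (P i)]
    (v : (i : Fin k) → P i → Fin d → ℝ) (ε : ℝ) (S : Finset ((i : Fin k) × P i)) : ℝ :=
  sSup {r : ℝ | ∃ x : (i : Fin k) → P i → ℝ,
    (∀ i j, 0 ≤ x i j) ∧ (∀ i, ∑ j, x i j = 1) ∧
    (∀ p ∈ S, x p.1 p.2 = 1) ∧
    (∀ p : (i : Fin k) × P i, p ∉ S →
      ε ^ 2 / (10 * Real.log d) <
        v p.1 p.2 ⬝ᵥ ((∑ q ∈ S, vecMulVec (v q.1 q.2) (v q.1 q.2))⁻¹ *ᵥ v p.1 p.2) →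
      x p.1 p.2 = 0) ∧
    r = lambdaMin (∑ i, ∑ j, x i j • vecMulVec (v i j) (v i j))}

/-- `u` is an orthonormal family of eigenvectors of `A` with eigenvalues `α`, orthonormality
being expressed by Parseval's identity together with normalization. -/
structure IsEigensystem {d : ℕ} (A : Matrix (Fin d) (Fin d) ℝ) (α : Fin d → ℝ)
    (u : Fin d → Fin d → ℝ) : Prop where
  isHermitian : A.IsHermitian
  mulVec_eq : ∀ i, A *ᵥ u i = α i • u i
  parseval : ∀ x y : Fin d → ℝ, x ⬝ᵥ y = ∑ i, (u i ⬝ᵥ x) * (u i ⬝ᵥ y)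
  norm_eq : ∀ i, u i ⬝ᵥ u i = 1

theorem Matrix.IsHermitian.isEigensystem {d : ℕ} {A : Matrix (Fin d) (Fin d) ℝ}
    (hA : A.IsHermitian) :
    IsEigensystem A hA.eigenvalues (fun i => (hA.eigenvectorBasis i).ofLp) where
  isHermitian := hA
  mulVec_eq i := hA.mulVec_eigenvectorBasis i
  parseval x y := by
    have h := hA.eigenvectorBasis.sum_inner_mul_inner (WithLp.toLp 2 x) (WithLp.toLp 2 y)
    simp only [EuclideanSpace.inner_eq_star_dotProduct, star_trivial] at h
    rw [dotProduct_comm, ← h]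
    exact Finset.sum_congr rfl fun i _ => by rw [dotProduct_comm y]
  norm_eq i := by
    have h := hA.eigenvectorBasis.orthonormal.1 i
    have h2 := real_inner_self_eq_norm_sq (hA.eigenvectorBasis i)
    rw [h, EuclideanSpace.inner_eq_star_dotProduct] at h2
    simpa using h2

theorem Matrix.IsHermitian.dotProduct_mulVec_comm {d : ℕ} {A : Matrix (Fin d) (Fin d) ℝ}
    (hA : A.IsHermitian) (x y : Fin d → ℝ) : x ⬝ᵥ (A *ᵥ y) = (A *ᵥ x) ⬝ᵥ y := by
  rw [dotProduct_mulVec, ← mulVec_transpose, ← conjTranspose_eq_transpose_of_trivial, hA.eq]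

theorem dotProduct_vecMulVec_mulVec {d : ℕ} (w y z : Fin d → ℝ) :
    y ⬝ᵥ (vecMulVec w w *ᵥ z) = (y ⬝ᵥ w) * (w ⬝ᵥ z) := by
  rw [vecMulVec_mulVec]
  simp [mul_comm]

theorem isHermitian_vecMulVec_self {d : ℕ} (w : Fin d → ℝ) : (vecMulVec w w).IsHermitian := by
  ext i j
  simp [vecMulVec_apply, mul_comm]

theorem Matrix.IsHermitian.sum {ι : Type*} {d : ℕ} {s : Finset ι}
    {A : ι → Matrix (Fin d) (Fin d) ℝ} (h : ∀ i ∈ s, (A i).IsHermitian) :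
    (∑ i ∈ s, A i).IsHermitian := by
  rw [IsHermitian, conjTranspose_sum]
  exact Finset.sum_congr rfl fun i hi => (h i hi).eq

theorem Matrix.IsHermitian.real_smul {d : ℕ} {A : Matrix (Fin d) (Fin d) ℝ}
    (h : A.IsHermitian) (c : ℝ) : (c • A).IsHermitian := by
  rw [IsHermitian, conjTranspose_smul, h.eq, star_trivial]

namespace IsEigensystem

variable {d : ℕ} {A B : Matrix (Fin d) (Fin d) ℝ} {α β : Fin d → ℝ} {u v : Fin d → Fin d → ℝ}

theorem dotProduct_mulVec_left (h : IsEigensystem A α u) (i : Fin d) (y : Fin d → ℝ) :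
    u i ⬝ᵥ (A *ᵥ y) = α i * (u i ⬝ᵥ y) := by
  rw [h.isHermitian.dotProduct_mulVec_comm, h.mulVec_eq, smul_dotProduct, smul_eq_mul]

theorem dotProduct_mulVec_self (h : IsEigensystem A α u) (y : Fin d → ℝ) :
    y ⬝ᵥ (A *ᵥ y) = ∑ i, α i * (u i ⬝ᵥ y) ^ 2 := by
  rw [h.parseval]
  exact Finset.sum_congr rfl fun i _ => by rw [h.dotProduct_mulVec_left]; ring

theorem sum_sq (h : IsEigensystem A α u) (y : Fin d → ℝ) :
    ∑ i, (u i ⬝ᵥ y) ^ 2 = y ⬝ᵥ y := by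
  rw [h.parseval y y]
  exact Finset.sum_congr rfl fun i _ => by ring

/-- Klein's inequality for the convex function `exp (-·)`. -/
theorem klein (hA : IsEigensystem A α u) (hB : IsEigensystem B β v) :
    ∑ j, Real.exp (-β j) - ∑ j, Real.exp (-β j) * (v j ⬝ᵥ ((A - B) *ᵥ v j)) ≤
      ∑ i, Real.exp (-α i) := by
  have key : ∀ i j, (Real.exp (-β j) - Real.exp (-β j) * (α i - β j)) * (u i ⬝ᵥ v j) ^ 2 ≤
      Real.exp (-α i) * (u i ⬝ᵥ v j) ^ 2 := by
    intro i j
    refine mul_le_mul_of_nonneg_right ?_ (sq_nonneg _)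
    have h1 := Real.add_one_le_exp (-(α i - β j))
    have h2 : Real.exp (-α i) = Real.exp (-β j) * Real.exp (-(α i - β j)) := by
      rw [← Real.exp_add]; congr 1; ring
    rw [h2]
    nlinarith [Real.exp_pos (-β j)]
  have hR : ∑ i, Real.exp (-α i) = ∑ j, ∑ i, Real.exp (-α i) * (u i ⬝ᵥ v j) ^ 2 := by
    rw [Finset.sum_comm]
    refine Finset.sum_congr rfl fun i _ => ?_
    rw [← Finset.mul_sum]
    simp_rw [dotProduct_comm (u i)]
    rw [hB.sum_sq, hA.norm_eq, mul_one]
  rw [hR, ← Finset.sum_sub_distrib]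
  refine Finset.sum_le_sum fun j _ => le_trans (le_of_eq ?_) (Finset.sum_le_sum fun i _ => key i j)
  rw [sub_mulVec, dotProduct_sub, hA.dotProduct_mulVec_self, hB.mulVec_eq, dotProduct_smul,
    hB.norm_eq]
  have h1 := hA.sum_sq (v j)
  rw [hB.norm_eq] at h1
  have : ∀ i, (Real.exp (-β j) - Real.exp (-β j) * (α i - β j)) * (u i ⬝ᵥ v j) ^ 2 =
      (Real.exp (-β j) + Real.exp (-β j) * β j) * (u i ⬝ᵥ v j) ^ 2
        - Real.exp (-β j) * (α i * (u i ⬝ᵥ v j) ^ 2) := fun i => by ring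
  simp_rw [this]
  rw [Finset.sum_sub_distrib, ← Finset.mul_sum, ← Finset.mul_sum, h1]
  simp only [smul_eq_mul]
  ring

end IsEigensystem

theorem mul_exp_neg_sub_exp_neg_le (a b : ℝ) :
    (b - a) * (Real.exp (-a) - Real.exp (-b)) ≤
      (b - a) ^ 2 * (Real.exp (-a) + Real.exp (-b)) := by
  have h1 := Real.add_one_le_exp (-(b - a))
  have h2 := Real.add_one_le_exp (b - a)
  have e1 : Real.exp (-b) = Real.exp (-a) * Real.exp (-(b - a)) := by
    rw [← Real.exp_add]; congr 1; ring
  have e2 : Real.exp (-a) = Real.exp (-b) * Real.exp (b - a) := by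
    rw [← Real.exp_add]; congr 1; ring
  have pa := Real.exp_pos (-a)
  have pb := Real.exp_pos (-b)
  have f1 : Real.exp (-a) - Real.exp (-b) ≤ (b - a) * Real.exp (-a) := by
    nlinarith [mul_le_mul_of_nonneg_left h1 pa.le]
  have f2 : (b - a) * Real.exp (-b) ≤ Real.exp (-a) - Real.exp (-b) := by
    nlinarith [mul_le_mul_of_nonneg_left h2 pb.le]
  rcases le_total a b with h | h
  · nlinarith [mul_le_mul_of_nonneg_left f1 (sub_nonneg.2 h),
      mul_nonneg (sq_nonneg (b - a)) pb.le]
  · nlinarith [mul_le_mul_of_nonneg_left f2 (sub_nonneg.2 h),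
      mul_nonneg (sq_nonneg (b - a)) pa.le]

/-- The trace of `exp (-A)`. -/
noncomputable def expTrace {d : ℕ} (A : Matrix (Fin d) (Fin d) ℝ) (hA : A.IsHermitian) : ℝ :=
  ∑ i, Real.exp (-hA.eigenvalues i)

/-- The quadratic form of `exp (-A)`. -/
noncomputable def expForm {d : ℕ} (A : Matrix (Fin d) (Fin d) ℝ) (hA : A.IsHermitian)
    (w : Fin d → ℝ) : ℝ :=
  ∑ i, Real.exp (-hA.eigenvalues i) * ((hA.eigenvectorBasis i).ofLp ⬝ᵥ w) ^ 2

theorem expForm_nonneg {d : ℕ} {A : Matrix (Fin d) (Fin d) ℝ} (hA : A.IsHermitian)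
    (w : Fin d → ℝ) : 0 ≤ expForm A hA w :=
  Finset.sum_nonneg fun _ _ => mul_nonneg (Real.exp_pos _).le (sq_nonneg _)

/-- First-order lower bound for `expTrace` along a weighted sum of rank-one matrices. -/
theorem expTrace_sub_le {d : ℕ} {ι : Type*} (s : Finset ι) (c : ι → ℝ) (w : ι → Fin d → ℝ)
    {A B : Matrix (Fin d) (Fin d) ℝ} (hA : A.IsHermitian) (hB : B.IsHermitian)
    (h : A = B + ∑ k ∈ s, c k • vecMulVec (w k) (w k)) :
    expTrace B hB - ∑ k ∈ s, c k * expForm B hB (w k) ≤ expTrace A hA := by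
  refine le_trans (le_of_eq ?_) (hA.isEigensystem.klein hB.isEigensystem)
  have h' : A - B = ∑ k ∈ s, c k • vecMulVec (w k) (w k) := by rw [h]; abel
  rw [h', expTrace]
  congr 1
  simp only [expForm, Finset.mul_sum, Matrix.sum_mulVec, dotProduct_sum, smul_mulVec,
    dotProduct_smul, dotProduct_vecMulVec_mulVec, smul_eq_mul]
  rw [Finset.sum_comm]
  refine Finset.sum_congr rfl fun j _ => Finset.sum_congr rfl fun k _ => ?_
  rw [dotProduct_comm (w k)]
  ring

theorem expForm_sub_le {d : ℕ} {G : Matrix (Fin d) (Fin d) ℝ} (hG : G.IsHermitian)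
    (w : Fin d → ℝ) (hH : (G + vecMulVec w w).IsHermitian) :
    expForm G hG w - expForm _ hH w ≤ (w ⬝ᵥ w) * (expForm G hG w + expForm _ hH w) := by
  have sG := hG.isEigensystem
  have sH := hH.isEigensystem
  unfold expForm
  set γ := hG.eigenvalues
  set η := hH.eigenvalues
  set g : Fin d → Fin d → ℝ := fun i => (hG.eigenvectorBasis i).ofLp
  set h : Fin d → Fin d → ℝ := fun i => (hH.eigenvectorBasis i).ofLp
  change ∑ i, Real.exp (-γ i) * (g i ⬝ᵥ w) ^ 2 - ∑ j, Real.exp (-η j) * (h j ⬝ᵥ w) ^ 2 ≤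
    (w ⬝ᵥ w) * (∑ i, Real.exp (-γ i) * (g i ⬝ᵥ w) ^ 2 + ∑ j, Real.exp (-η j) * (h j ⬝ᵥ w) ^ 2)
  have hc : ∀ i j, (η j - γ i) * (g i ⬝ᵥ h j) = (g i ⬝ᵥ w) * (h j ⬝ᵥ w) := by
    intro i j
    have h1 : g i ⬝ᵥ ((G + vecMulVec w w) *ᵥ h j) = η j * (g i ⬝ᵥ h j) := by
      rw [sH.mulVec_eq, dotProduct_smul, smul_eq_mul]
    rw [add_mulVec, dotProduct_add, sG.dotProduct_mulVec_left, dotProduct_vecMulVec_mulVec,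
      dotProduct_comm w] at h1
    linarith
  have e1 : ∑ i, Real.exp (-γ i) * (g i ⬝ᵥ w) ^ 2 =
      ∑ i, ∑ j, Real.exp (-γ i) * ((g i ⬝ᵥ w) * ((g i ⬝ᵥ h j) * (h j ⬝ᵥ w))) := by
    refine Finset.sum_congr rfl fun i _ => ?_
    rw [← Finset.mul_sum, ← Finset.mul_sum, sq]
    congr 2
    rw [sH.parseval (g i) w]
    exact Finset.sum_congr rfl fun j _ => by rw [dotProduct_comm (g i)]
  have e2 : ∑ j, Real.exp (-η j) * (h j ⬝ᵥ w) ^ 2 =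
      ∑ i, ∑ j, Real.exp (-η j) * ((g i ⬝ᵥ w) * ((g i ⬝ᵥ h j) * (h j ⬝ᵥ w))) := by
    rw [Finset.sum_comm]
    refine Finset.sum_congr rfl fun j _ => ?_
    rw [← Finset.mul_sum, sq]
    congr 1
    rw [sG.parseval (h j) w, Finset.sum_mul]
    exact Finset.sum_congr rfl fun i _ => by ring
  have e3 : (w ⬝ᵥ w) * (∑ i, Real.exp (-γ i) * (g i ⬝ᵥ w) ^ 2 +
      ∑ j, Real.exp (-η j) * (h j ⬝ᵥ w) ^ 2) =
      ∑ i, ∑ j, (g i ⬝ᵥ w) ^ 2 * (h j ⬝ᵥ w) ^ 2 * (Real.exp (-γ i) + Real.exp (-η j)) := by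
    rw [mul_add]
    nth_rewrite 1 [← sH.sum_sq w]
    rw [← sG.sum_sq w, mul_comm, Finset.sum_mul_sum, Finset.sum_mul_sum, ← Finset.sum_add_distrib]
    refine Finset.sum_congr rfl fun i _ => ?_
    rw [← Finset.sum_add_distrib]
    refine Finset.sum_congr rfl fun j _ => ?_
    ring
  rw [e3, e1, e2, ← Finset.sum_sub_distrib]
  refine Finset.sum_le_sum fun i _ => ?_
  rw [← Finset.sum_sub_distrib]
  refine Finset.sum_le_sum fun j _ => ?_
  have k := mul_le_mul_of_nonneg_right (mul_exp_neg_sub_exp_neg_le (γ i) (η j))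
    (sq_nonneg (g i ⬝ᵥ h j))
  have hc' := hc i j
  calc _ = ((g i ⬝ᵥ w) * (h j ⬝ᵥ w)) * (g i ⬝ᵥ h j) * (Real.exp (-γ i) - Real.exp (-η j)) := by ring
    _ = (η j - γ i) * (Real.exp (-γ i) - Real.exp (-η j)) * (g i ⬝ᵥ h j) ^ 2 := by rw [← hc']; ring
    _ ≤ _ := k
    _ = ((g i ⬝ᵥ w) * (h j ⬝ᵥ w)) ^ 2 * (Real.exp (-γ i) + Real.exp (-η j)) := by rw [← hc']; ring
    _ = _ := by ring

/-- Adding `w wᵀ` decreases `expTrace` at almost the first-order rate when `w` is short. -/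
theorem expTrace_add_vecMulVec_le {d : ℕ} {G : Matrix (Fin d) (Fin d) ℝ} (hG : G.IsHermitian)
    (w : Fin d → ℝ) (hH : (G + vecMulVec w w).IsHermitian) {r : ℝ} (hw : w ⬝ᵥ w ≤ r) :
    expTrace _ hH ≤ expTrace G hG - (1 - 2 * r) * expForm G hG w := by
  have h1 := expTrace_sub_le {()} (fun _ => -1) (fun _ => w) hG hH (by simp)
  simp only [Finset.sum_singleton] at h1
  have h2 := expForm_sub_le hG w hH
  have a := expForm_nonneg hG w
  have b := expForm_nonneg hH w
  have hw0 : 0 ≤ w ⬝ᵥ w := by simpa using dotProduct_star_self_nonneg w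
  have h3 : (1 - 2 * (w ⬝ᵥ w)) * expForm G hG w ≤ expForm _ hH w := by
    have : (1 + w ⬝ᵥ w) * ((1 - 2 * (w ⬝ᵥ w)) * expForm G hG w) ≤
        (1 + w ⬝ᵥ w) * expForm _ hH w := by
      nlinarith [mul_nonneg (mul_nonneg hw0 hw0) a]
    exact le_of_mul_le_mul_left this (by linarith)
  nlinarith

theorem expTrace_congr {d : ℕ} {A B : Matrix (Fin d) (Fin d) ℝ} (hA : A.IsHermitian)
    (hB : B.IsHermitian) (h : A = B) : expTrace A hA = expTrace B hB := by
  subst h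
  rfl

theorem expTrace_smul_one {d : ℕ} (c : ℝ)
    (h : (c • (1 : Matrix (Fin d) (Fin d) ℝ)).IsHermitian) :
    expTrace _ h = d * Real.exp (-c) := by
  have hl : ∀ i, h.eigenvalues i = c := by
    intro i
    have h1 := h.isEigensystem.mulVec_eq i
    have h4 := congrArg (fun z => z ⬝ᵥ (h.eigenvectorBasis i).ofLp) h1
    simp only [smul_mulVec, one_mulVec, smul_dotProduct, h.isEigensystem.norm_eq i] at h4
    simpa using h4.symm
  rw [expTrace]
  simp_rw [hl]
  simp

/-- One of the rank-one matrices does at least as well as the (slightly shrunk) average. -/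
theorem exists_expTrace_add_le {d : ℕ} {κ : Type*} [Fintype κ] (w : κ → Fin d → ℝ) (x : κ → ℝ)
    (hx0 : ∀ j, 0 ≤ x j) (hx1 : ∑ j, x j = 1) {r : ℝ} (hr : 0 ≤ r)
    (hshort : ∀ j, x j = 1 ∨ x j = 0 ∨ w j ⬝ᵥ w j ≤ r)
    {G : Matrix (Fin d) (Fin d) ℝ} (hG : G.IsHermitian)
    (hE : (G + (1 - 2 * r) • ∑ j, x j • vecMulVec (w j) (w j)).IsHermitian) :
    ∃ j, expTrace (G + vecMulVec (w j) (w j)) (hG.add (isHermitian_vecMulVec_self _)) ≤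
      expTrace _ hE := by
  by_cases h1 : ∃ j, x j = 1
  · obtain ⟨j, hj⟩ := h1
    refine ⟨j, ?_⟩
    have hz : ∀ l, l ≠ j → x l = 0 := by
      classical
      intro l hl
      have h2 := Finset.add_sum_erase Finset.univ x (Finset.mem_univ j)
      have h3 : x l ≤ ∑ i ∈ Finset.univ.erase j, x i :=
        Finset.single_le_sum (fun i _ => hx0 i) (Finset.mem_erase.2 ⟨hl, Finset.mem_univ l⟩)
      have := hx0 l
      linarith
    have hsum : ∑ l, x l • vecMulVec (w l) (w l) = vecMulVec (w j) (w j) := by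
      rw [Finset.sum_eq_single j (fun l _ hl => by rw [hz l hl, zero_smul])
        (fun h => absurd (Finset.mem_univ j) h), hj, one_smul]
    have h4 := expTrace_sub_le {()} (fun _ => -(2 * r)) (fun _ => w j) hE
      (hG.add (isHermitian_vecMulVec_self (w j))) (by
        rw [hsum, Finset.sum_singleton, sub_smul, one_smul, neg_smul]; abel)
    simp only [Finset.sum_singleton] at h4
    have := mul_nonneg hr (expForm_nonneg (hG.add (isHermitian_vecMulVec_self (w j))) (w j))
    linarith
  · push Not at h1
    by_contra! hcon
    have hlow := expTrace_sub_le Finset.univ (fun j => (1 - 2 * r) * x j) w hE hG (by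
      rw [Finset.smul_sum]; simp_rw [smul_smul])
    have hup : ∀ j, x j * expTrace (G + vecMulVec (w j) (w j))
        (hG.add (isHermitian_vecMulVec_self _)) ≤
        x j * (expTrace G hG - (1 - 2 * r) * expForm G hG (w j)) := by
      intro j
      rcases hshort j with h | h | h
      · exact absurd h (h1 j)
      · simp [h]
      · exact mul_le_mul_of_nonneg_left (expTrace_add_vecMulVec_le hG (w j) _ h) (hx0 j)
    obtain ⟨j, hj⟩ : ∃ j, 0 < x j := by
      by_contra! h
      have := Finset.sum_nonpos fun j (_ : j ∈ Finset.univ) => h j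
      linarith
    have hlt : ∑ j, x j * expTrace _ hE < ∑ j, x j * expTrace (G + vecMulVec (w j) (w j))
        (hG.add (isHermitian_vecMulVec_self _)) :=
      Finset.sum_lt_sum (fun j _ => mul_le_mul_of_nonneg_left (hcon j).le (hx0 j))
        ⟨j, Finset.mem_univ j, mul_lt_mul_of_pos_left (hcon j) hj⟩
    have hle := Finset.sum_le_sum fun j (_ : j ∈ Finset.univ) => hup j
    rw [← Finset.sum_mul, hx1, one_mul] at hlt
    simp_rw [mul_sub] at hle
    rw [Finset.sum_sub_distrib, ← Finset.sum_mul, hx1, one_mul] at hle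
    have : ∑ j, x j * ((1 - 2 * r) * expForm G hG (w j)) =
      ∑ j, (1 - 2 * r) * x j * expForm G hG (w j) := Finset.sum_congr rfl fun j _ => by ring
    linarith

/-- Rounding a fractional choice whose weighted sum of outer products is `θ • 1`, when every
properly fractional vector is short. -/
theorem exists_rounding {d k : ℕ} (hd : 0 < d) {P : Fin k → Type*} [∀ i, Fintype (P i)]
    (w : (i : Fin k) → P i → Fin d → ℝ) (x : (i : Fin k) → P i → ℝ)
    (hx0 : ∀ i j, 0 ≤ x i j) (hx1 : ∀ i, ∑ j, x i j = 1) {r θ : ℝ} (hr : 0 ≤ r)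
    (hshort : ∀ i j, x i j = 1 ∨ x i j = 0 ∨ w i j ⬝ᵥ w i j ≤ r)
    (hsum : ∑ i, ∑ j, x i j • vecMulVec (w i j) (w i j) = θ • 1) :
    ∃ σ : (i : Fin k) → P i, ∀ y : Fin d → ℝ,
      ((1 - 2 * r) * θ - Real.log d) * (y ⬝ᵥ y) ≤ ∑ i, (w i (σ i) ⬝ᵥ y) ^ 2 := by
  classical
  set E : Fin k → Matrix (Fin d) (Fin d) ℝ := fun i =>
    (1 - 2 * r) • ∑ j, x i j • vecMulVec (w i j) (w i j) with hE
  have hEh : ∀ i, (E i).IsHermitian := fun i =>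
    (IsHermitian.sum fun j _ => (isHermitian_vecMulVec_self _).real_smul _).real_smul _
  set F : Finset (Fin k) → ((i : Fin k) → P i) → Fin k → Matrix (Fin d) (Fin d) ℝ := fun T σ i =>
    if i ∈ T then vecMulVec (w i (σ i)) (w i (σ i)) else E i with hF
  have hFh : ∀ T σ i, (F T σ i).IsHermitian := by
    intro T σ i
    simp only [hF]
    split_ifs
    exacts [isHermitian_vecMulVec_self _, hEh i]
  have hne : ∀ i, Nonempty (P i) := by
    intro i
    by_contra h
    rw [not_nonempty_iff] at h
    have := hx1 i
    simp at this
  have main : ∀ T : Finset (Fin k), ∃ σ : (i : Fin k) → P i,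
      expTrace (∑ i, F T σ i) (IsHermitian.sum fun i _ => hFh T σ i) ≤
        d * Real.exp (-((1 - 2 * r) * θ)) := by
    intro T
    induction T using Finset.induction_on with
    | empty =>
      refine ⟨fun i => (hne i).some, le_of_eq ?_⟩
      have h0 : ∀ σ : (i : Fin k) → P i, ∑ i, F ∅ σ i = ((1 - 2 * r) * θ) • 1 := by
        intro σ
        simp only [hF, Finset.notMem_empty, if_false, hE]
        rw [← Finset.smul_sum, hsum, smul_smul]
      rw [expTrace_congr _ (isHermitian_one.real_smul _) (h0 _), expTrace_smul_one]
    | insert i₀ T hi ih =>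
      obtain ⟨σ, hσ⟩ := ih
      set G := ∑ i ∈ Finset.univ.erase i₀, F T σ i
      have hG : G.IsHermitian := IsHermitian.sum fun i _ => hFh T σ i
      have hold : ∑ i, F T σ i = G + E i₀ := by
        rw [← Finset.sum_erase_add _ _ (Finset.mem_univ i₀)]
        simp [hF, hi, G]
      obtain ⟨j, hj⟩ := exists_expTrace_add_le (w i₀) (x i₀) (hx0 i₀) (hx1 i₀) hr (hshort i₀) hG
        (hG.add (hEh i₀))
      refine ⟨Function.update σ i₀ j, ?_⟩
      have hnew : ∑ i, F (insert i₀ T) (Function.update σ i₀ j) i =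
          G + vecMulVec (w i₀ j) (w i₀ j) := by
        rw [← Finset.sum_erase_add _ _ (Finset.mem_univ i₀)]
        congr 1
        · refine Finset.sum_congr rfl fun i hi' => ?_
          have hne' := (Finset.mem_erase.1 hi').1
          simp [hF, hne']
        · simp [hF]
      rw [expTrace_congr _ (hG.add (isHermitian_vecMulVec_self _)) hnew]
      refine hj.trans ?_
      rwa [expTrace_congr _ (hG.add (hEh i₀)) hold] at hσ
  obtain ⟨σ, hσ⟩ := main Finset.univ
  refine ⟨σ, fun y => ?_⟩
  have hs := (IsHermitian.sum fun i (_ : i ∈ Finset.univ) => hFh Finset.univ σ i).isEigensystem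
  set lam := (IsHermitian.sum fun i (_ : i ∈ Finset.univ) => hFh Finset.univ σ i).eigenvalues
  have hd' : (0 : ℝ) < d := by exact_mod_cast hd
  have hlam : ∀ i, (1 - 2 * r) * θ - Real.log d ≤ lam i := by
    intro i
    have h1 : Real.exp (-lam i) ≤ d * Real.exp (-((1 - 2 * r) * θ)) :=
      le_trans (Finset.single_le_sum (f := fun i => Real.exp (-lam i))
        (fun i _ => (Real.exp_pos _).le) (Finset.mem_univ i)) hσ
    rw [← Real.exp_log hd', ← Real.exp_add, Real.exp_le_exp] at h1
    linarith
  have h1 := hs.dotProduct_mulVec_self y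
  have h2 : y ⬝ᵥ ((∑ i, F Finset.univ σ i) *ᵥ y) = ∑ i, (w i (σ i) ⬝ᵥ y) ^ 2 := by
    simp only [hF, Finset.mem_univ, if_true, Matrix.sum_mulVec, dotProduct_sum,
      dotProduct_vecMulVec_mulVec]
    exact Finset.sum_congr rfl fun i _ => by rw [dotProduct_comm y]; ring
  rw [← h2, h1, ← hs.sum_sq y, Finset.mul_sum]
  exact Finset.sum_le_sum fun i _ => mul_le_mul_of_nonneg_right (hlam i) (sq_nonneg _)

/-- The sum of the outer products of the vectors indexed by `S`. -/
def outerSum {ι : Type*} {d : ℕ} (u : ι → Fin d → ℝ) (S : Finset ι) : Matrix (Fin d) (Fin d) ℝ :=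
  ∑ i ∈ S, vecMulVec (u i) (u i)

theorem det_add_smul_vecMulVec {d : ℕ} {M : Matrix (Fin d) (Fin d) ℝ} (hM : IsUnit M.det) (c : ℝ)
    (u : Fin d → ℝ) :
    (M + c • vecMulVec u u).det = M.det * (1 + c * (u ⬝ᵥ (M⁻¹ *ᵥ u))) := by
  rw [← vecMulVec_smul, vecMulVec_eq Unit, det_add_replicateCol_mul_replicateRow hM]
  congr 1
  rw [det_unique, Matrix.mul_assoc, ← replicateCol_mulVec]
  simp [Matrix.mul_apply, dotProduct, Finset.mul_sum]

section Selection

variable {ι : Type*} {d : ℕ} (u : ι → Fin d → ℝ)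

theorem dotProduct_outerSum_mulVec (S : Finset ι) (y : Fin d → ℝ) :
    y ⬝ᵥ (outerSum u S *ᵥ y) = ∑ i ∈ S, (u i ⬝ᵥ y) ^ 2 := by
  rw [outerSum, Matrix.sum_mulVec, dotProduct_sum]
  exact Finset.sum_congr rfl fun i _ => by
    rw [dotProduct_vecMulVec_mulVec, dotProduct_comm y]; ring

theorem posSemidef_outerSum (S : Finset ι) : (outerSum u S).PosSemidef :=
  PosSemidef.of_dotProduct_mulVec_nonneg (IsHermitian.sum fun _ _ => isHermitian_vecMulVec_self _)
    fun y => by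
      rw [star_trivial, dotProduct_outerSum_mulVec]
      exact Finset.sum_nonneg fun _ _ => sq_nonneg _

theorem sum_leverage {S : Finset ι} (hS : IsUnit (outerSum u S).det) :
    ∑ i ∈ S, u i ⬝ᵥ ((outerSum u S)⁻¹ *ᵥ u i) = d := by
  have h : trace ((outerSum u S)⁻¹ * outerSum u S) = d := by
    rw [nonsing_inv_mul _ hS, trace_one, Fintype.card_fin]
  nth_rewrite 2 [outerSum] at h
  rw [Finset.mul_sum, trace_sum] at h
  rw [← h]
  exact Finset.sum_congr rfl fun i _ => by rw [mul_vecMulVec, trace_vecMulVec, dotProduct_comm]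

variable [DecidableEq ι]

theorem det_outerSum_erase {S : Finset ι} (hS : IsUnit (outerSum u S).det) {i : ι} (hi : i ∈ S) :
    (outerSum u (S.erase i)).det = (outerSum u S).det * (1 - u i ⬝ᵥ ((outerSum u S)⁻¹ *ᵥ u i)) := by
  have h : outerSum u (S.erase i) = outerSum u S + (-1 : ℝ) • vecMulVec (u i) (u i) := by
    rw [outerSum, outerSum, ← Finset.sum_erase_add S _ hi, neg_smul, one_smul, add_neg_cancel_right]
  rw [h, det_add_smul_vecMulVec hS]
  ring

theorem det_outerSum_insert {S : Finset ι} (hS : IsUnit (outerSum u S).det) {i : ι} (hi : i ∉ S) :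
    (outerSum u (insert i S)).det =
      (outerSum u S).det * (1 + u i ⬝ᵥ ((outerSum u S)⁻¹ *ᵥ u i)) := by
  have h : outerSum u (insert i S) = outerSum u S + (1 : ℝ) • vecMulVec (u i) (u i) := by
    rw [outerSum, outerSum, Finset.sum_insert hi, one_smul, add_comm]
  rw [h, det_add_smul_vecMulVec hS, one_mul]

/-- A subset of prescribed cardinality `s ≥ d` can be chosen so that its sum of outer products stays
nonsingular. -/
theorem exists_subset_card_eq_det_pos {T : Finset ι} (hT : 0 < (outerSum u T).det) {s : ℕ}
    (hds : d ≤ s) (hs : s ≤ T.card) :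
    ∃ S ⊆ T, S.card = s ∧ 0 < (outerSum u S).det := by
  induction hn : T.card - s generalizing T with
  | zero => exact ⟨T, subset_rfl, by omega, hT⟩
  | succ n ih =>
    obtain ⟨i, hi, hlt⟩ : ∃ i ∈ T, u i ⬝ᵥ ((outerSum u T)⁻¹ *ᵥ u i) < 1 := by
      by_contra! h
      have h1 := Finset.card_nsmul_le_sum T _ 1 h
      rw [sum_leverage u hT.ne'.isUnit, nsmul_eq_mul, mul_one] at h1
      have : T.card ≤ d := by exact_mod_cast h1
      omega
    have hc := Finset.card_erase_of_mem hi
    obtain ⟨S, hST, h⟩ := ih (T := T.erase i)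
      (by rw [det_outerSum_erase u hT.ne'.isUnit hi]; exact mul_pos hT (by linarith))
      (by omega) (by omega)
    exact ⟨S, hST.trans (Finset.erase_subset _ _), h⟩

/-- A small subset with respect to which all remaining vectors are short: a subset of
cardinality `⌊d / η⌋ + d` maximizing the determinant. -/
theorem exists_subset_leverage_le [Fintype ι] (hu : 0 < (outerSum u Finset.univ).det) {η : ℝ}
    (hη : 0 < η) :
    ∃ S : Finset ι, (S.card : ℝ) ≤ d / η + d ∧ IsUnit (outerSum u S).det ∧
      ∀ j ∉ S, u j ⬝ᵥ ((outerSum u S)⁻¹ *ᵥ u j) ≤ η := by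
  have hdη : (0 : ℝ) ≤ d / η := by positivity
  set s := ⌊(d : ℝ) / η⌋₊ + d with hs
  have hsle : (s : ℝ) ≤ d / η + d := by
    rw [hs]; push_cast
    linarith [Nat.floor_le hdη]
  rcases le_total (Finset.univ : Finset ι).card s with hk | hk
  · refine ⟨Finset.univ, le_trans (by exact_mod_cast hk) hsle, hu.ne'.isUnit, fun j hj => ?_⟩
    exact absurd (Finset.mem_univ j) hj
  · obtain ⟨S₀, -, hS₀c, hS₀⟩ := exists_subset_card_eq_det_pos u hu (by omega) hk
    obtain ⟨S, hSmem, hmax⟩ := (Finset.univ.powersetCard s).exists_max_image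
      (fun S => (outerSum u S).det) ⟨S₀, Finset.mem_powersetCard.2 ⟨Finset.subset_univ _, hS₀c⟩⟩
    have hSc := (Finset.mem_powersetCard.1 hSmem).2
    have hSpos : 0 < (outerSum u S).det := lt_of_lt_of_le hS₀
      (hmax S₀ (Finset.mem_powersetCard.2 ⟨Finset.subset_univ _, hS₀c⟩))
    refine ⟨S, by rw [hSc]; exact hsle, hSpos.ne'.isUnit, fun j hj => ?_⟩
    set l := u j ⬝ᵥ ((outerSum u S)⁻¹ *ᵥ u j) with hl
    have hl0 : 0 ≤ l := by
      simpa using (posSemidef_outerSum u S).inv.dotProduct_mulVec_nonneg (u j)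
    have hins := det_outerSum_insert u hSpos.ne'.isUnit hj
    rw [← hl] at hins
    have hTpos : 0 < (outerSum u (insert j S)).det := by rw [hins]; positivity
    set h : ι → ℝ := fun i => u i ⬝ᵥ ((outerSum u (insert j S))⁻¹ *ᵥ u i)
    have hj' := det_outerSum_erase u hTpos.ne'.isUnit (Finset.mem_insert_self j S)
    rw [Finset.erase_insert hj, hins, mul_assoc] at hj'
    have hone : (1 + l) * (1 - h j) = 1 :=
      (mul_left_cancel₀ hSpos.ne' (hj'.symm.trans (mul_one _).symm))
    have hmin : ∀ i ∈ insert j S, h j ≤ h i := by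
      intro i hi
      have h1 := hmax ((insert j S).erase i) (Finset.mem_powersetCard.2 ⟨Finset.subset_univ _, by
        rw [Finset.card_erase_of_mem hi, Finset.card_insert_of_notMem hj, hSc]; rfl⟩)
      rw [det_outerSum_erase u hTpos.ne'.isUnit hi, hins] at h1
      have h2 : (outerSum u S).det * ((1 + l) * (1 - h i)) ≤
          (outerSum u S).det * ((1 + l) * (1 - h j)) := by
        rw [hone, mul_one, ← mul_assoc]; exact h1
      have h3 := le_of_mul_le_mul_left (le_of_mul_le_mul_left h2 hSpos) (by linarith)
      linarith
    have hcard := Finset.card_nsmul_le_sum _ h (h j) hmin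
    rw [sum_leverage u hTpos.ne'.isUnit, Finset.card_insert_of_notMem hj, hSc, nsmul_eq_mul]
      at hcard
    have hfl := Nat.lt_floor_add_one ((d : ℝ) / η)
    rw [div_lt_iff₀ hη] at hfl
    push_cast [hs] at hcard
    have h4 : l * (⌊(d : ℝ) / η⌋₊ + 1) ≤ d := by
      have h5 : h j * (1 + l) = l := by linarith
      have h6 := mul_le_mul_of_nonneg_right hcard (show 0 ≤ 1 + l by linarith)
      have h7 : ((⌊(d : ℝ) / η⌋₊ : ℝ) + d + 1) * h j * (1 + l) = (⌊(d : ℝ) / η⌋₊ + d + 1) * l := by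
        rw [mul_assoc, h5]
      linarith
    by_contra! hcon
    have : η * (⌊(d : ℝ) / η⌋₊ + 1) < l * (⌊(d : ℝ) / η⌋₊ + 1) :=
      mul_lt_mul_of_pos_right hcon (by positivity)
    linarith

end Selection

open scoped MatrixOrder Matrix.Norms.L2Operator in
theorem Matrix.PosDef.exists_isUnit_eq_transpose_mul_self {d : ℕ} {A : Matrix (Fin d) (Fin d) ℝ}
    (hA : A.PosDef) : ∃ B : Matrix (Fin d) (Fin d) ℝ, IsUnit B.det ∧ A = Bᵀ * B := by
  obtain ⟨B, hB, h⟩ := CStarAlgebra.isStrictlyPositive_iff_eq_star_mul_self.mp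
    hA.isStrictlyPositive
  refine ⟨B, (isUnit_iff_isUnit_det B).1 hB, ?_⟩
  rw [h, star_eq_conjTranspose, conjTranspose_eq_transpose_of_trivial]

theorem dotProduct_inv_mulVec_le {d : ℕ} {A X : Matrix (Fin d) (Fin d) ℝ} (hA : A.PosSemidef)
    (hAu : IsUnit A.det) (hXu : IsUnit X.det)
    (hle : ∀ y, y ⬝ᵥ (A *ᵥ y) ≤ y ⬝ᵥ (X *ᵥ y)) (v : Fin d → ℝ) :
    v ⬝ᵥ (X⁻¹ *ᵥ v) ≤ v ⬝ᵥ (A⁻¹ *ᵥ v) := by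
  have h1 := hA.dotProduct_mulVec_nonneg (X⁻¹ *ᵥ v - A⁻¹ *ᵥ v)
  have hAA : A *ᵥ (A⁻¹ *ᵥ v) = v := by rw [mulVec_mulVec, mul_nonsing_inv _ hAu, one_mulVec]
  have hXX : X *ᵥ (X⁻¹ *ᵥ v) = v := by rw [mulVec_mulVec, mul_nonsing_inv _ hXu, one_mulVec]
  have h2 := hle (X⁻¹ *ᵥ v)
  rw [hXX] at h2
  rw [star_trivial, mulVec_sub, hAA, dotProduct_sub, sub_dotProduct, sub_dotProduct,
    hA.1.dotProduct_mulVec_comm (A⁻¹ *ᵥ v), hAA] at h1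
  rw [dotProduct_comm v (A⁻¹ *ᵥ v)]
  rw [dotProduct_comm (X⁻¹ *ᵥ v) v] at *
  linarith

theorem posSemidef_sub_smul_one_iff {d : ℕ} {A : Matrix (Fin d) (Fin d) ℝ} (hA : A.IsHermitian)
    (c : ℝ) : (A - c • (1 : Matrix (Fin d) (Fin d) ℝ)).PosSemidef ↔
      ∀ y : Fin d → ℝ, c * (y ⬝ᵥ y) ≤ y ⬝ᵥ (A *ᵥ y) := by
  rw [posSemidef_iff_dotProduct_mulVec]
  simp only [hA.sub (isHermitian_one.real_smul c), true_and, star_trivial, sub_mulVec,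
    dotProduct_sub, smul_mulVec, one_mulVec, dotProduct_smul, smul_eq_mul, sub_nonneg]

theorem le_lambdaMin {d : ℕ} (hd : 0 < d) {A : Matrix (Fin d) (Fin d) ℝ} {c : ℝ}
    (h : (A - c • (1 : Matrix (Fin d) (Fin d) ℝ)).PosSemidef) : c ≤ lambdaMin A := by
  refine le_csSup ⟨A ⟨0, hd⟩ ⟨0, hd⟩, fun b hb => ?_⟩ h
  have := Matrix.PosSemidef.diag_nonneg hb (i := ⟨0, hd⟩)
  simpa using this

/-- The fractional sum of outer products. -/
noncomputable def fracSum {d k : ℕ} {P : Fin k → Type*} [∀ i, Fintype (P i)]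
    (v : (i : Fin k) → P i → Fin d → ℝ) (x : (i : Fin k) → P i → ℝ) :
    Matrix (Fin d) (Fin d) ℝ :=
  ∑ i, ∑ j, x i j • vecMulVec (v i j) (v i j)

theorem isHermitian_fracSum {d k : ℕ} {P : Fin k → Type*} [∀ i, Fintype (P i)]
    (v : (i : Fin k) → P i → Fin d → ℝ) (x : (i : Fin k) → P i → ℝ) :
    (fracSum v x).IsHermitian :=
  IsHermitian.sum fun _ _ => IsHermitian.sum fun _ _ =>
    (isHermitian_vecMulVec_self _).real_smul _

theorem dotProduct_fracSum_mulVec {d k : ℕ} {P : Fin k → Type*} [∀ i, Fintype (P i)]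
    (v : (i : Fin k) → P i → Fin d → ℝ) (x : (i : Fin k) → P i → ℝ) (y : Fin d → ℝ) :
    y ⬝ᵥ (fracSum v x *ᵥ y) = ∑ i, ∑ j, x i j * (v i j ⬝ᵥ y) ^ 2 := by
  simp only [fracSum, Matrix.sum_mulVec, dotProduct_sum, smul_mulVec, dotProduct_smul,
    dotProduct_vecMulVec_mulVec, smul_eq_mul]
  refine Finset.sum_congr rfl fun i _ => Finset.sum_congr rfl fun j _ => ?_
  rw [dotProduct_comm y]; ring

theorem vecMulVec_mulVec_self {d : ℕ} (C : Matrix (Fin d) (Fin d) ℝ) (v : Fin d → ℝ) :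
    vecMulVec (C *ᵥ v) (C *ᵥ v) = C * vecMulVec v v * Cᵀ := by
  rw [mul_vecMulVec, vecMulVec_mul, vecMul_transpose]

/-- A fractional solution all of whose properly fractional vectors have small leverage can be
rounded at the loss of a factor `1 - ε`. -/
theorem exists_choice_of_leverage_le {d k : ℕ} (hd : 2 ≤ d) {ε : ℝ} (hε0 : 0 < ε)
    {P : Fin k → Type*} [∀ i, Fintype (P i)]
    (v : (i : Fin k) → P i → Fin d → ℝ) (x : (i : Fin k) → P i → ℝ)
    (hx0 : ∀ i j, 0 ≤ x i j) (hx1 : ∀ i, ∑ j, x i j = 1) {c : ℝ} (hc : 0 < c)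
    (hlow : ∀ y : Fin d → ℝ, c * (y ⬝ᵥ y) ≤ y ⬝ᵥ (fracSum v x *ᵥ y))
    (hshort : ∀ i j, x i j = 1 ∨ x i j = 0 ∨
      v i j ⬝ᵥ ((fracSum v x)⁻¹ *ᵥ v i j) ≤ ε ^ 2 / (10 * Real.log d)) (hε1 : ε < 1) :
    ∃ σ : (i : Fin k) → P i, ∀ y : Fin d → ℝ,
      (1 - ε) * c * (y ⬝ᵥ y) ≤ ∑ i, (v i (σ i) ⬝ᵥ y) ^ 2 := by
  have hlog : 0 < Real.log d := Real.log_pos (by exact_mod_cast (show 1 < d by omega))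
  set θ : ℝ := 2 * Real.log d / ε with hθ
  have hθ0 : 0 < θ := by positivity
  have hpd : (θ⁻¹ • fracSum v x).PosDef := by
    refine PosDef.of_dotProduct_mulVec_pos ((isHermitian_fracSum v x).real_smul _) fun y hy => ?_
    rw [star_trivial, smul_mulVec, dotProduct_smul, smul_eq_mul]
    have hy' : 0 < y ⬝ᵥ y := by simpa using dotProduct_star_self_pos_iff.2 hy
    exact mul_pos (inv_pos.2 hθ0) (lt_of_lt_of_le (mul_pos hc hy') (hlow y))
  obtain ⟨B, hB, hXB⟩ := hpd.exists_isUnit_eq_transpose_mul_self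
  have hX : fracSum v x = θ • (Bᵀ * B) := by
    rw [← hXB, smul_smul, mul_inv_cancel₀ hθ0.ne', one_smul]
  have hBB : B * B⁻¹ = 1 := mul_nonsing_inv _ hB
  have hBB' : B⁻¹ * B = 1 := nonsing_inv_mul _ hB
  have hBBt : (B⁻¹)ᵀ * Bᵀ = 1 := by rw [← transpose_mul, hBB, transpose_one]
  have hBBt' : Bᵀ * (B⁻¹)ᵀ = 1 := by rw [← transpose_mul, hBB', transpose_one]
  have hinv : (fracSum v x)⁻¹ = θ⁻¹ • (B⁻¹ * (B⁻¹)ᵀ) := by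
    refine inv_eq_right_inv ?_
    rw [hX, smul_mul_smul_comm, mul_inv_cancel₀ hθ0.ne', one_smul, Matrix.mul_assoc,
      ← Matrix.mul_assoc B, hBB, Matrix.one_mul, hBBt']
  have hnorm : ∀ u : Fin d → ℝ, ((B⁻¹)ᵀ *ᵥ u) ⬝ᵥ ((B⁻¹)ᵀ *ᵥ u) =
      θ * (u ⬝ᵥ ((fracSum v x)⁻¹ *ᵥ u)) := by
    intro u
    rw [hinv, smul_mulVec, dotProduct_smul, smul_eq_mul, mul_inv_cancel_left₀ hθ0.ne',
      ← mulVec_mulVec, dotProduct_mulVec u, ← mulVec_transpose]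
  have hr : θ * (ε ^ 2 / (10 * Real.log d)) = ε / 5 := by
    rw [hθ]; field_simp; norm_num
  obtain ⟨σ, hσ⟩ := exists_rounding (by omega : 0 < d) (fun i j => (B⁻¹)ᵀ *ᵥ v i j) x hx0 hx1
    (r := ε / 5) (θ := θ) (by positivity) (fun i j => by
      rcases hshort i j with h | h | h
      · exact Or.inl h
      · exact Or.inr (Or.inl h)
      · refine Or.inr (Or.inr ?_)
        rw [hnorm, ← hr]
        exact mul_le_mul_of_nonneg_left h hθ0.le)
    (by
      have h : ∑ i, ∑ j, x i j • vecMulVec ((B⁻¹)ᵀ *ᵥ v i j) ((B⁻¹)ᵀ *ᵥ v i j) =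
          (B⁻¹)ᵀ * fracSum v x * B⁻¹ := by
        simp only [fracSum, Matrix.mul_sum, Matrix.sum_mul, vecMulVec_mulVec_self,
          transpose_transpose, Matrix.mul_smul, Matrix.smul_mul]
      rw [h, hX, Matrix.mul_smul, Matrix.smul_mul, ← Matrix.mul_assoc, hBBt, Matrix.one_mul, hBB])
  refine ⟨σ, fun y => ?_⟩
  have h1 := hσ (B *ᵥ y)
  have h2 : ∀ u : Fin d → ℝ, ((B⁻¹)ᵀ *ᵥ u) ⬝ᵥ (B *ᵥ y) = u ⬝ᵥ y := by
    intro u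
    rw [mulVec_transpose, ← dotProduct_mulVec, mulVec_mulVec, hBB', one_mulVec]
  simp only [h2] at h1
  refine le_trans ?_ h1
  have h3 : θ * ((B *ᵥ y) ⬝ᵥ (B *ᵥ y)) = y ⬝ᵥ (fracSum v x *ᵥ y) := by
    rw [hX, smul_mulVec, dotProduct_smul, smul_eq_mul, ← mulVec_mulVec, dotProduct_mulVec y,
      ← mulVec_transpose, transpose_transpose]
  have h4 := hlow y
  rw [← h3] at h4
  have h5 : (1 - ε) * θ ≤ (1 - 2 * (ε / 5)) * θ - Real.log d := by
    have : ε * θ = 2 * Real.log d := by rw [hθ]; field_simp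
    nlinarith
  have h6 : 0 ≤ (B *ᵥ y) ⬝ᵥ (B *ᵥ y) := by simpa using dotProduct_star_self_nonneg (B *ᵥ y)
  calc (1 - ε) * c * (y ⬝ᵥ y) = (1 - ε) * (c * (y ⬝ᵥ y)) := by ring
    _ ≤ (1 - ε) * (θ * ((B *ᵥ y) ⬝ᵥ (B *ᵥ y))) := mul_le_mul_of_nonneg_left h4 (by linarith)
    _ = (1 - ε) * θ * ((B *ᵥ y) ⬝ᵥ (B *ᵥ y)) := by ring
    _ ≤ _ := mul_le_mul_of_nonneg_right h5 h6

/-- if `OPT > 0` is the maximum of `λ_min(∑ᵢ v_{iσ(i)}v_{iσ(i)}ᵀ)` over choice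
functions `σ`, then there is a set `S` of at most `10 d ln d/ε² + d` index pairs such that
`A_S` is invertible and `OPT ≤ CP(S) ≤ OPT/(1−ε)`. -/
theorem exists_good_guess {d k : ℕ} (hd : 2 ≤ d) {ε : ℝ} (hε0 : 0 < ε) (hε1 : ε < 1)
    {P : Fin k → Type*} [∀ i, Fintype (P i)] [∀ i, DecidableEq (P i)]
    (v : (i : Fin k) → P i → Fin d → ℝ)
    (OPT : ℝ)
    (hOPT : IsGreatest {r : ℝ | ∃ σ : (i : Fin k) → P i,
      r = lambdaMin (∑ i, vecMulVec (v i (σ i)) (v i (σ i)))} OPT)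
    (hpos : 0 < OPT) :
    ∃ S : Finset ((i : Fin k) × P i),
      (S.card : ℝ) ≤ 10 * d * Real.log d / ε ^ 2 + d ∧
      IsUnit (∑ p ∈ S, vecMulVec (v p.1 p.2) (v p.1 p.2)).det ∧
      OPT ≤ CPval v ε S ∧ CPval v ε S ≤ OPT / (1 - ε) := by
  have hlog : 0 < Real.log d := Real.log_pos (by exact_mod_cast (show 1 < d by omega))
  have hd0 : 0 < d := by omega
  obtain ⟨⟨τ, hτ⟩, hub⟩ := hOPT
  set u : Fin k → Fin d → ℝ := fun i => v i (τ i) with hu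
  have hdet : 0 < (outerSum u Finset.univ).det := by
    have hne : {c : ℝ | (outerSum u Finset.univ -
        c • (1 : Matrix (Fin d) (Fin d) ℝ)).PosSemidef}.Nonempty :=
      ⟨0, by simpa using posSemidef_outerSum u Finset.univ⟩
    rw [hτ] at hpos
    obtain ⟨c, hc, hc0⟩ := exists_lt_of_lt_csSup hne hpos
    refine PosDef.det_pos ?_
    have := PosDef.posSemidef_add hc (PosDef.one.smul hc0)
    rwa [sub_add_cancel] at this
  have hη : 0 < ε ^ 2 / (10 * Real.log d) := by positivity
  obtain ⟨S₀, hcard, hunit, hlev⟩ := exists_subset_leverage_le u hdet hη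
  set f : Fin k ↪ (i : Fin k) × P i := ⟨fun i => ⟨i, τ i⟩, fun i j h => congrArg Sigma.fst h⟩
  set S := S₀.map f with hS
  have hAS : ∑ p ∈ S, vecMulVec (v p.1 p.2) (v p.1 p.2) = outerSum u S₀ := by
    rw [hS, Finset.sum_map]; rfl
  have hupper : ∀ r ∈ {r : ℝ | ∃ x : (i : Fin k) → P i → ℝ,
      (∀ i j, 0 ≤ x i j) ∧ (∀ i, ∑ j, x i j = 1) ∧
      (∀ p ∈ S, x p.1 p.2 = 1) ∧
      (∀ p : (i : Fin k) × P i, p ∉ S →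
        ε ^ 2 / (10 * Real.log d) <
          v p.1 p.2 ⬝ᵥ ((∑ q ∈ S, vecMulVec (v q.1 q.2) (v q.1 q.2))⁻¹ *ᵥ v p.1 p.2) →
        x p.1 p.2 = 0) ∧
      r = lambdaMin (∑ i, ∑ j, x i j • vecMulVec (v i j) (v i j))}, r ≤ OPT / (1 - ε) := by
    rintro r ⟨x, hx0, hx1, hxS, hxL, rfl⟩
    rw [hAS] at hxL
    have hquad : ∀ y : Fin d → ℝ, y ⬝ᵥ (outerSum u S₀ *ᵥ y) ≤ y ⬝ᵥ (fracSum v x *ᵥ y) := by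
      intro y
      rw [dotProduct_outerSum_mulVec, dotProduct_fracSum_mulVec]
      have h1 : ∑ i ∈ S₀, (u i ⬝ᵥ y) ^ 2 = ∑ p ∈ S, x p.1 p.2 * (v p.1 p.2 ⬝ᵥ y) ^ 2 := by
        rw [hS, Finset.sum_map]
        refine Finset.sum_congr rfl fun i hi => ?_
        rw [hxS (f i) (Finset.mem_map_of_mem f hi), one_mul]
        rfl
      rw [h1, ← Fintype.sum_sigma' fun i j => x i j * (v i j ⬝ᵥ y) ^ 2]
      exact Finset.sum_le_sum_of_subset_of_nonneg (Finset.subset_univ S)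
        fun p _ _ => mul_nonneg (hx0 _ _) (sq_nonneg _)
    refine csSup_le ⟨0, ?_⟩ fun c hc => ?_
    · refine (posSemidef_sub_smul_one_iff (isHermitian_fracSum v x) 0).2 fun y => ?_
      rw [zero_mul]
      refine le_trans ?_ (hquad y)
      simpa using (posSemidef_outerSum u S₀).dotProduct_mulVec_nonneg y
    · rw [le_div_iff₀ (by linarith)]
      rcases le_or_gt c 0 with hc0 | hc0
      · exact le_trans (mul_nonpos_of_nonpos_of_nonneg hc0 (by linarith)) hpos.le
      have hlow := (posSemidef_sub_smul_one_iff (isHermitian_fracSum v x) c).1 hc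
      have hXu : IsUnit (fracSum v x).det := by
        refine (PosDef.det_pos ?_).ne'.isUnit
        have := PosDef.posSemidef_add hc (PosDef.one.smul hc0)
        rwa [sub_add_cancel] at this
      obtain ⟨σ, hσ⟩ := exists_choice_of_leverage_le hd hε0 v x hx0 hx1 hc0 hlow (fun i j => by
        by_cases hmem : (⟨i, j⟩ : (i : Fin k) × P i) ∈ S
        · exact Or.inl (hxS _ hmem)
        · rcases lt_or_ge (ε ^ 2 / (10 * Real.log d))
            (v i j ⬝ᵥ ((outerSum u S₀)⁻¹ *ᵥ v i j)) with h | h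
          · exact Or.inr (Or.inl (hxL _ hmem h))
          · exact Or.inr (Or.inr ((dotProduct_inv_mulVec_le (posSemidef_outerSum u S₀) hunit hXu
              hquad _).trans h))) hε1
      have h1 := le_lambdaMin hd0 ((posSemidef_sub_smul_one_iff
        (posSemidef_outerSum (fun i => v i (σ i)) Finset.univ).1 ((1 - ε) * c)).2 fun y => by
          rw [dotProduct_outerSum_mulVec]; exact hσ y)
      have h2 := hub ⟨σ, rfl⟩
      rw [mul_comm]
      exact h1.trans h2
  have hfeas : ∃ x : (i : Fin k) → P i → ℝ,
      (∀ i j, 0 ≤ x i j) ∧ (∀ i, ∑ j, x i j = 1) ∧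
      (∀ p ∈ S, x p.1 p.2 = 1) ∧
      (∀ p : (i : Fin k) × P i, p ∉ S →
        ε ^ 2 / (10 * Real.log d) <
          v p.1 p.2 ⬝ᵥ ((∑ q ∈ S, vecMulVec (v q.1 q.2) (v q.1 q.2))⁻¹ *ᵥ v p.1 p.2) →
        x p.1 p.2 = 0) ∧
      OPT = lambdaMin (∑ i, ∑ j, x i j • vecMulVec (v i j) (v i j)) := by
    refine ⟨fun i j => if j = τ i then 1 else 0, fun i j => by positivity, fun i => by simp,
      fun p hp => ?_, fun p hp hlt => ?_, ?_⟩
    · obtain ⟨i, -, rfl⟩ := Finset.mem_map.1 hp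
      exact if_pos rfl
    · rw [hAS] at hlt
      obtain ⟨i, j⟩ := p
      refine if_neg fun h => ?_
      simp only at h
      subst h
      have hi : i ∉ S₀ := fun hi => hp (Finset.mem_map_of_mem f hi)
      exact absurd (hlev i hi) (not_le.2 hlt)
    · rw [hτ]
      simp
  refine ⟨S, ?_, by rw [hAS]; exact hunit, le_csSup ⟨_, hupper⟩ hfeas, csSup_le ⟨_, hfeas⟩ hupper⟩
  rw [hS, Finset.card_map]
  refine hcard.trans (le_of_eq ?_)
  congr 1
  field_simp
end

section
/- Let L be a symmetric d×d real matrix, let C₁, C₂ be positive definite d×d real matrices, and let K₁, K₂ be positive semidefinite d×d real matrices. Then there exists η > 0 such that the function z ↦ tr exp(L + log(C₁ + z·K₁) + log(C₂ − z·K₂)) is concave on the interval (−η, η). -/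
open Matrix

/-- Apply a real function to a symmetric real matrix through its spectral decomposition
(junk value `0` for non-Hermitian input). -/
noncomputable def matFun {d : ℕ} (f : ℝ → ℝ) (A : Matrix (Fin d) (Fin d) ℝ) :
    Matrix (Fin d) (Fin d) ℝ :=
  if hA : A.IsHermitian then
    (hA.eigenvectorUnitary : Matrix (Fin d) (Fin d) ℝ) *
      Matrix.diagonal (fun i => f (hA.eigenvalues i)) *
      star (hA.eigenvectorUnitary : Matrix (Fin d) (Fin d) ℝ)
  else 0

/-- The matrix exponential of a symmetric real matrix. -/
noncomputable def matExp {d : ℕ} : Matrix (Fin d) (Fin d) ℝ → Matrix (Fin d) (Fin d) ℝ :=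
  matFun Real.exp

/-- The matrix logarithm of a positive definite real matrix. -/
noncomputable def matLog {d : ℕ} : Matrix (Fin d) (Fin d) ℝ → Matrix (Fin d) (Fin d) ℝ :=
  matFun Real.log

section
open Set Filter Topology

theorem hasDerivAt_intervalIntegral_of_eventually {E : Type*} [NormedAddCommGroup E]
    [NormedSpace ℂ E] {F F' : ℂ → ℝ → E} {a b : ℝ} {z₀ : ℂ}
    (hF : ∀ s ∈ uIcc a b, ∀ᶠ x : ℂ × ℝ in 𝓝 (z₀, s), ContinuousAt (F x.1) x.2)
    (hF' : ∀ s ∈ uIcc a b, ContinuousAt (Function.uncurry F') (z₀, s))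
    (hd : ∀ s ∈ uIcc a b, ∀ᶠ x : ℂ × ℝ in 𝓝 (z₀, s),
      HasDerivAt (fun z => F z x.2) (F' x.1 x.2) x.1) :
    HasDerivAt (fun z => ∫ s in a..b, F z s) (∫ s in a..b, F' z₀ s) z₀ := by
  have hF'z : ContinuousOn (F' z₀) (uIcc a b) := fun s hs =>
    (ContinuousAt.comp (f := fun s : ℝ => (z₀, s)) (hF' s hs) (by fun_prop)).continuousWithinAt
  obtain ⟨B, hB⟩ := isCompact_uIcc.exists_bound_of_continuousOn hF'z
  have hev : ∀ᶠ z in 𝓝 z₀, ∀ s ∈ uIcc a b, ContinuousAt (F z) s ∧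
      HasDerivAt (fun z => F z s) (F' z s) z ∧ ‖F' z s‖ ≤ B + 1 := by
    apply isCompact_uIcc.eventually_forall_of_forall_eventually
    intro s hs
    have h2 : ∀ᶠ x in 𝓝 (z₀, s), ‖Function.uncurry F' x‖ < B + 1 := by
      refine (hF' s hs).norm.eventually_lt_const ?_
      exact (hB s hs).trans_lt (lt_add_one B)
    filter_upwards [hF s hs, hd s hs, h2] with x hx1 hx2 hx3 using ⟨hx1, hx2, hx3.le⟩
  have hc : ∀ z, (∀ s ∈ uIcc a b, ContinuousAt (F z) s ∧
      HasDerivAt (fun z => F z s) (F' z s) z ∧ ‖F' z s‖ ≤ B + 1) →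
      ContinuousOn (F z) (uIcc a b) := fun z hz s hs => (hz s hs).1.continuousWithinAt
  refine (intervalIntegral.hasDerivAt_integral_of_dominated_loc_of_deriv_le
    (bound := fun _ => B + 1) hev ?_ (hc z₀ hev.self_of_nhds).intervalIntegrable ?_ ?_
    intervalIntegrable_const ?_).2
  · filter_upwards [hev] with z hz
    exact ((hc z hz).mono uIoc_subset_uIcc).aestronglyMeasurable measurableSet_uIoc
  · exact (hF'z.mono uIoc_subset_uIcc).aestronglyMeasurable measurableSet_uIoc
  · exact .of_forall fun t ht z hz => (hz t (uIoc_subset_uIcc ht)).2.2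
  · exact .of_forall fun t ht z hz => (hz t (uIoc_subset_uIcc ht)).2.1

theorem ContinuousAt.ringInverse {R X : Type*} [NormedRing R] [CompleteSpace R]
    [TopologicalSpace X] {f : X → R} {x : X}
    (hf : ContinuousAt f x) (hx : IsUnit (f x)) :
    ContinuousAt (fun y => Ring.inverse (f y)) x := by
  obtain ⟨u, hu⟩ := hx
  have h : ContinuousAt (Ring.inverse : R → R) (f x) := hu ▸ NormedRing.inverse_continuousAt u
  exact ContinuousAt.comp (f := f) h hf

section BanachAlgebra

variable {𝔸 : Type*} [NormedRing 𝔸] [NormedAlgebra ℂ 𝔸]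

/-- The principal logarithm in a complex Banach algebra, as the integral of `da * a⁻¹` along the
segment from `1` to `a`. -/
noncomputable def segmentLog (a : 𝔸) : 𝔸 :=
  ∫ s in (0 : ℝ)..1, (a - 1) * Ring.inverse (1 + (s : ℂ) • (a - 1))

/-- The segment from `1` to `a` consists of units. -/
def SegmentUnit (a : 𝔸) : Prop :=
  ∀ s ∈ uIcc (0 : ℝ) 1, IsUnit (1 + (s : ℂ) • (a - 1))

variable [CompleteSpace 𝔸]

theorem HasDerivAt.ringInverse {f : ℂ → 𝔸} {f' : 𝔸} {z : ℂ} (hf : HasDerivAt f f' z)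
    (hz : IsUnit (f z)) :
    HasDerivAt (fun w => Ring.inverse (f w))
      (-(Ring.inverse (f z) * f' * Ring.inverse (f z))) z := by
  obtain ⟨u, hu⟩ := hz
  have h1 := hasFDerivAt_ringInverse (𝕜 := ℂ) u
  rw [hu] at h1
  have h2 := h1.comp_hasDerivAt z hf
  rw [← hu, Ring.inverse_unit]
  exact h2.congr_deriv (by simp)

theorem SegmentUnit.continuousOn_inverse {a : 𝔸} (h : SegmentUnit a) :
    ContinuousOn (fun s : ℝ => Ring.inverse (1 + (s : ℂ) • (a - 1))) (uIcc 0 1) := fun s hs =>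
  (ContinuousAt.ringInverse (f := fun s : ℝ => 1 + (s : ℂ) • (a - 1)) (by fun_prop)
    (h s hs)).continuousWithinAt

theorem hasDerivAt_mul_ringInverse_segment (p q : 𝔸) (s : ℝ) (z : ℂ)
    (hu : IsUnit (1 + (s : ℂ) • (p + z • q - 1))) :
    HasDerivAt (fun w : ℂ => (p + w • q - 1) * Ring.inverse (1 + (s : ℂ) • (p + w • q - 1)))
      (Ring.inverse (1 + (s : ℂ) • (p + z • q - 1)) * q *
        Ring.inverse (1 + (s : ℂ) • (p + z • q - 1))) z := by
  have h1 : HasDerivAt (fun w : ℂ => p + w • q - 1) q z := by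
    simpa using (((hasDerivAt_id z).smul_const q).const_add p).sub_const 1
  have h2 : HasDerivAt (fun w : ℂ => 1 + (s : ℂ) • (p + w • q - 1)) ((s : ℂ) • q) z :=
    (h1.const_smul (s : ℂ)).const_add 1
  refine (h1.mul (h2.ringInverse hu)).congr_deriv ?_
  generalize p + z • q - 1 = X at hu
  have h4 := Ring.mul_inverse_cancel _ hu
  generalize Ring.inverse (1 + (s : ℂ) • X) = R at h4
  have h5 : R = 1 - (s : ℂ) • (X * R) := by
    rw [add_mul, one_mul, smul_mul_assoc] at h4
    exact eq_sub_of_add_eq h4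
  symm
  calc R * q * R = (1 - (s : ℂ) • (X * R)) * q * R := by rw [← h5]
    _ = _ := by
      simp only [sub_mul, one_mul, smul_mul_assoc, mul_smul_comm, mul_neg, mul_assoc]
      abel

/-- `segmentLog` is holomorphic along complex affine lines. -/
theorem hasDerivAt_segmentLog (p q : 𝔸) (z₀ : ℂ) (h : SegmentUnit (p + z₀ • q)) :
    HasDerivAt (fun z : ℂ => segmentLog (p + z • q))
      (∫ s in (0 : ℝ)..1, Ring.inverse (1 + (s : ℂ) • (p + z₀ • q - 1)) * q *
        Ring.inverse (1 + (s : ℂ) • (p + z₀ • q - 1))) z₀ := by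
  have hev : ∀ s ∈ uIcc (0 : ℝ) 1, ∀ᶠ x : ℂ × ℝ in 𝓝 (z₀, s),
      IsUnit (1 + (x.2 : ℂ) • (p + x.1 • q - 1)) := fun s hs =>
    (show Continuous fun x : ℂ × ℝ => 1 + (x.2 : ℂ) • (p + x.1 • q - 1) by
      fun_prop).continuousAt.eventually (Units.isOpen.mem_nhds (h s hs))
  refine hasDerivAt_intervalIntegral_of_eventually
    (F' := fun z s => Ring.inverse (1 + (s : ℂ) • (p + z • q - 1)) * q *
        Ring.inverse (1 + (s : ℂ) • (p + z • q - 1))) (fun s hs => ?_) (fun s hs => ?_)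
    (fun s hs => ?_)
  · filter_upwards [hev s hs] with x hx
    exact continuousAt_const.mul (ContinuousAt.ringInverse (by fun_prop) hx)
  · have : ContinuousAt (fun x : ℂ × ℝ => Ring.inverse (1 + (x.2 : ℂ) • (p + x.1 • q - 1)))
        (z₀, s) := ContinuousAt.ringInverse (by fun_prop) (h s hs)
    exact (this.mul continuousAt_const).mul this
  · filter_upwards [hev s hs] with x hx
    exact hasDerivAt_mul_ringInverse_segment p q x.2 x.1 hx

theorem hasDerivAt_segmentLog_smul (a : 𝔸) {z : ℂ} (hz : z ≠ 0) (h : SegmentUnit (z • a)) :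
    HasDerivAt (fun w : ℂ => segmentLog (w • a)) (z⁻¹ • 1) z := by
  have h1 := hasDerivAt_segmentLog 0 a z (by simpa using h)
  simp only [zero_add] at h1
  refine h1.congr_deriv ?_
  have hder : ∀ s ∈ uIcc (0 : ℝ) 1, HasDerivAt
      (fun s : ℝ => (s : ℂ) • (a * Ring.inverse (1 + (s : ℂ) • (z • a - 1))))
      (Ring.inverse (1 + (s : ℂ) • (z • a - 1)) * a *
        Ring.inverse (1 + (s : ℂ) • (z • a - 1))) s := by
    intro s hs
    have hu := h s hs
    have h2 : HasDerivAt (fun w : ℂ => 1 + w • (z • a - 1)) (z • a - 1) (s : ℂ) := by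
      simpa using ((hasDerivAt_id (s : ℂ)).smul_const (z • a - 1)).const_add 1
    have h3 := (hasDerivAt_id (s : ℂ)).smul ((h2.ringInverse hu).const_mul a)
    have h4 := h3.scomp s (Complex.ofRealCLM.hasDerivAt (x := s))
    refine HasDerivAt.congr_deriv h4 ?_
    have hc : Commute a (1 + (s : ℂ) • (z • a - 1)) :=
      (Commute.one_right a).add_right
        ((((Commute.refl a).smul_right z).sub_right (Commute.one_right a)).smul_right _)
    have h5 := Ring.mul_inverse_cancel _ hu
    have h6 := Ring.inverse_mul_cancel _ hu
    simp only [id, Complex.ofRealCLM_apply, Complex.ofReal_one, one_smul]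
    generalize hM : 1 + (s : ℂ) • (z • a - 1) = M at h5 h6 hc
    generalize Ring.inverse M = R at h5 h6
    have h7 : a * R = R * a :=
      calc a * R = R * M * a * R := by rw [h6, one_mul]
        _ = R * (a * M) * R := by rw [hc.eq, mul_assoc R]
        _ = R * a := by rw [mul_assoc, mul_assoc, h5, mul_one]
    have h8 : (s : ℂ) • (R * (z • a - 1) * R) = R - R * R := by
      have : (s : ℂ) • (z • a - 1) = M - 1 := by rw [← hM]; abel
      rw [← smul_mul_assoc, ← mul_smul_comm, this, mul_sub, h6, mul_one, sub_mul, one_mul]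
    rw [mul_neg, smul_neg, ← mul_smul_comm, h8, mul_sub, ← mul_assoc a R R, h7]
    abel
  rw [intervalIntegral.integral_eq_sub_of_hasDerivAt hder]
  · have hu := h 1 (by simp)
    simp only [Complex.ofReal_one, one_smul, add_sub_cancel, Complex.ofReal_zero, zero_smul,
      sub_zero] at hu ⊢
    have := Ring.mul_inverse_cancel _ hu
    rw [smul_mul_assoc] at this
    rw [← this, inv_smul_smul₀ hz]
  · exact ((h.continuousOn_inverse.mul continuousOn_const).mul
      h.continuousOn_inverse).intervalIntegrable

/-- Rotating the argument of the logarithm. -/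
theorem segmentLog_eq_add_rotation (a : 𝔸) (φ : ℝ)
    (h : ∀ ψ ∈ uIcc 0 φ, SegmentUnit (Complex.exp (-(ψ * Complex.I)) • a)) :
    segmentLog a =
      (φ * Complex.I) • (1 : 𝔸) + segmentLog (Complex.exp (-(φ * Complex.I)) • a) := by
  have hder : ∀ ψ ∈ uIcc 0 φ, HasDerivAt (fun ψ : ℝ => (ψ * Complex.I) • (1 : 𝔸) +
      segmentLog (Complex.exp (-(ψ * Complex.I)) • a)) 0 ψ := by
    intro ψ hψ
    have h1 : HasDerivAt (fun ψ : ℝ => (ψ * Complex.I : ℂ)) Complex.I ψ := by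
      simpa using (Complex.ofRealCLM.hasDerivAt (x := ψ)).mul_const Complex.I
    have h2 := h1.neg.cexp
    have h3 := (hasDerivAt_segmentLog_smul a (Complex.exp_ne_zero _) (h ψ hψ)).scomp ψ h2
    refine ((h1.smul_const (1 : 𝔸)).add h3).congr_deriv ?_
    rw [smul_smul, ← add_smul, mul_comm (Complex.exp _), mul_assoc]
    simp
  have h0 := intervalIntegral.integral_eq_sub_of_hasDerivAt hder (by simp)
  simp only [intervalIntegral.integral_zero] at h0
  have := eq_of_sub_eq_zero h0.symm
  rw [this]
  simp

end BanachAlgebra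

end

section
open Set Filter Topology
open scoped ComplexConjugate

theorem Complex.normSq_sub_conj_eq (a b : ℂ) :
    Complex.normSq (a - conj b) = Complex.normSq (a - b) + 4 * a.im * b.im := by
  simp [Complex.normSq_apply]; ring

theorem Complex.sub_conj_ne_zero {a b : ℂ} (ha : 0 < a.im) (hb : 0 < b.im) : a - conj b ≠ 0 := by
  intro h
  have := congrArg Complex.im h
  simp at this
  linarith

theorem Complex.norm_cayley_lt_one {a b : ℂ} (ha : 0 < a.im) (hb : 0 < b.im) :
    ‖(a - b) / (a - conj b)‖ < 1 := by
  have h := Complex.sub_conj_ne_zero ha hb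
  rw [norm_div, div_lt_one (norm_pos_iff.mpr h), Complex.norm_def, Complex.norm_def,
    Real.sqrt_lt_sqrt_iff (Complex.normSq_nonneg _), Complex.normSq_sub_conj_eq]
  have : 0 < a.im * b.im := mul_pos ha hb
  linarith

theorem Complex.im_cayley_symm_pos {w ζ : ℂ} (hw : 0 < w.im) (hζ : ‖ζ‖ < 1) :
    0 < ((w - conj w * ζ) / (1 - ζ)).im := by
  have h1 : Complex.normSq ζ < 1 := by
    rw [Complex.normSq_eq_norm_sq]
    nlinarith [norm_nonneg ζ]
  have h2 : 1 - ζ ≠ 0 := by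
    intro h
    rw [← sub_eq_zero.mp h] at hζ
    simp at hζ
  have h3 : ((w - conj w * ζ) / (1 - ζ)).im =
      w.im * (1 - Complex.normSq ζ) / Complex.normSq (1 - ζ) := by
    rw [Complex.div_im, ← sub_div]
    congr 1
    simp [Complex.normSq_apply]; ring
  rw [h3]
  exact div_pos (mul_pos hw (by linarith)) (Complex.normSq_pos.mpr h2)

/-- The Schwarz–Pick inequality on the upper half-plane, for maps into the open half-plane. -/
theorem Complex.schwarz_pick_of_im_pos {h : ℂ → ℂ} (hd : DifferentiableOn ℂ h {z | 0 < z.im})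
    (him : ∀ z : ℂ, 0 < z.im → 0 < (h z).im) {z w : ℂ} (hz : 0 < z.im) (hw : 0 < w.im) :
    Complex.normSq (h z - h w) * (z.im * w.im) ≤
      (h z).im * (h w).im * Complex.normSq (z - w) := by
  set φ : ℂ → ℂ := fun ζ => (w - conj w * ζ) / (1 - ζ) with hφ
  set g : ℂ → ℂ := fun ζ => (h (φ ζ) - h w) / (h (φ ζ) - conj (h w)) with hg
  have hne : ∀ ζ ∈ Metric.ball (0 : ℂ) 1, (1 : ℂ) - ζ ≠ 0 := by
    intro ζ hζ h
    rw [← sub_eq_zero.mp h] at hζ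
    simp at hζ
  have hφim : ∀ ζ ∈ Metric.ball (0 : ℂ) 1, 0 < (φ ζ).im := fun ζ hζ =>
    Complex.im_cayley_symm_pos hw (by simpa using hζ)
  have hφd : DifferentiableOn ℂ φ (Metric.ball 0 1) :=
    DifferentiableOn.div (by fun_prop) (by fun_prop) hne
  have hhd : DifferentiableOn ℂ (fun ζ => h (φ ζ)) (Metric.ball 0 1) := hd.comp hφd hφim
  have hgd : DifferentiableOn ℂ g (Metric.ball 0 1) :=
    DifferentiableOn.div (hhd.sub_const _) (hhd.sub_const _) fun ζ hζ =>
      Complex.sub_conj_ne_zero (him _ (hφim ζ hζ)) (him _ hw)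
  have hgm : MapsTo g (Metric.ball 0 1) (Metric.closedBall 0 1) := fun ζ hζ => by
    simpa [hg] using (Complex.norm_cayley_lt_one (him _ (hφim ζ hζ)) (him _ hw)).le
  have hg0 : g 0 = 0 := by simp [hg, hφ]
  have hzw := Complex.sub_conj_ne_zero hz hw
  have hww := Complex.sub_conj_ne_zero hw hw
  have hφz : φ ((z - w) / (z - conj w)) = z := by
    have h1 : 1 - (z - w) / (z - conj w) ≠ 0 := hne _ (by
      simpa using Complex.norm_cayley_lt_one hz hw)
    simp only [hφ]
    rw [div_eq_iff h1]
    field_simp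
    ring
  have key := Complex.norm_le_norm_of_mapsTo_ball hgd hgm hg0 (Complex.norm_cayley_lt_one hz hw)
  simp only [hg, hφz, norm_div] at key
  rw [div_le_div_iff₀ (norm_pos_iff.mpr (Complex.sub_conj_ne_zero (him z hz) (him w hw)))
    (norm_pos_iff.mpr hzw)] at key
  have key2 := mul_self_le_mul_self (by positivity) key
  have e : ∀ a b : ℂ, ‖a‖ * ‖b‖ * (‖a‖ * ‖b‖) = Complex.normSq a * Complex.normSq b := by
    intro a b
    rw [Complex.normSq_eq_norm_sq, Complex.normSq_eq_norm_sq]; ring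
  rw [e, e, Complex.normSq_sub_conj_eq z w, Complex.normSq_sub_conj_eq (h z) (h w)] at key2
  nlinarith

/-- The Schwarz–Pick inequality on the upper half-plane. -/
theorem Complex.schwarz_pick_of_im_nonneg {h : ℂ → ℂ}
    (hd : DifferentiableOn ℂ h {z | 0 < z.im})
    (him : ∀ z : ℂ, 0 < z.im → 0 ≤ (h z).im) {z w : ℂ} (hz : 0 < z.im) (hw : 0 < w.im) :
    Complex.normSq (h z - h w) * (z.im * w.im) ≤
      (h z).im * (h w).im * Complex.normSq (z - w) := by
  have key : ∀ τ : ℝ, 0 < τ → Complex.normSq (h z - h w) * (z.im * w.im) ≤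
      ((h z).im + τ) * ((h w).im + τ) * Complex.normSq (z - w) := by
    intro τ hτ
    have := Complex.schwarz_pick_of_im_pos (h := fun z => h z + τ * Complex.I)
      (hd.add_const _) (fun z hz => by simpa using add_pos_of_nonneg_of_pos (him z hz) hτ) hz hw
    simpa using this
  have hc : Tendsto (fun τ : ℝ => ((h z).im + τ) * ((h w).im + τ) * Complex.normSq (z - w))
      (𝓝[>] 0) (𝓝 ((h z).im * (h w).im * Complex.normSq (z - w))) := by
    have : Continuous fun τ : ℝ =>
      ((h z).im + τ) * ((h w).im + τ) * Complex.normSq (z - w) := by fun_prop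
    simpa using (this.tendsto 0).mono_left nhdsWithin_le_nhds
  exact ge_of_tendsto hc (eventually_nhdsWithin_of_forall key)

/-- If `-F(z)/z` is a Pick function and `F` is continuous at `0` with nonnegative value, then
`-(F(z) - F(0))/z` is a Pick function. -/
theorem Complex.im_sub_div_nonpos {F : ℂ → ℂ} (hd : DifferentiableOn ℂ F {z | 0 < z.im})
    (him : ∀ z : ℂ, 0 < z.im → (F z / z).im ≤ 0) (hc : ContinuousAt F 0)
    {c : ℝ} (hc0 : 0 ≤ c) (hF0 : F 0 = c) {z : ℂ} (hz : 0 < z.im) :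
    ((F z - F 0) / z).im ≤ 0 := by
  have hne : ∀ z : ℂ, 0 < z.im → z ≠ 0 := by
    rintro z hz rfl
    simp at hz
  have hpick : ∀ ε : ℝ, 0 < ε →
      Complex.normSq (ε * (F z / z) + Complex.I * F (ε * Complex.I)) * z.im ≤
        -(F z / z).im * (F (ε * Complex.I)).re * Complex.normSq (z - ε * Complex.I) := by
    intro ε hε
    have hεi : 0 < ((ε : ℂ) * Complex.I).im := by simpa using hε
    have h1 := Complex.schwarz_pick_of_im_nonneg (h := fun z => -(F z / z))
      (hd.div differentiableOn_id fun z hz => hne z hz).neg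
      (fun z hz => by simpa using him z hz) hz hεi
    have hεc : (ε : ℂ) ≠ 0 := by exact_mod_cast hε.ne'
    have h2 : F (ε * Complex.I) / (ε * Complex.I) =
        (ε : ℂ)⁻¹ * (-(Complex.I * F (ε * Complex.I))) := by
      field_simp
      rw [Complex.I_sq]; ring
    have h3 : -(F z / z) - -(F (ε * Complex.I) / (ε * Complex.I)) =
        -((ε : ℂ)⁻¹ * (ε * (F z / z) + Complex.I * F (ε * Complex.I))) := by
      rw [h2]; field_simp; ring
    have h4 : (-(F (ε * Complex.I) / (ε * Complex.I))).im = ε⁻¹ * (F (ε * Complex.I)).re := by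
      rw [h2, ← Complex.ofReal_inv, mul_neg, neg_neg, Complex.im_ofReal_mul, Complex.I_mul_im]
    simp only [h3, h4, Complex.normSq_neg, Complex.normSq_mul] at h1
    rw [← Complex.ofReal_inv, Complex.normSq_ofReal] at h1
    simp only [Complex.neg_im, Complex.mul_im, Complex.ofReal_re, Complex.I_im, mul_one,
      Complex.ofReal_im, add_zero, Complex.I_re, mul_zero] at h1 ⊢
    have h5 := mul_le_mul_of_nonneg_left h1 hε.le
    refine le_of_eq_of_le ?_ (h5.trans_eq ?_)
    · field_simp
    · field_simp
  have hlim : Tendsto (fun ε : ℝ => F (ε * Complex.I)) (𝓝[>] 0) (𝓝 c) := by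
    have h0 : Tendsto (fun ε : ℝ => (ε : ℂ) * Complex.I) (𝓝[>] 0) (𝓝 0) := by
      have : Continuous fun ε : ℝ => (ε : ℂ) * Complex.I := by fun_prop
      simpa using (this.tendsto 0).mono_left nhdsWithin_le_nhds
    rw [← hF0]
    exact hc.tendsto.comp h0
  have hε : Tendsto (fun ε : ℝ => (ε : ℂ)) (𝓝[>] 0) (𝓝 0) := by
    simpa using (Complex.continuous_ofReal.tendsto 0).mono_left nhdsWithin_le_nhds
  have hl : Tendsto (fun ε : ℝ =>
      Complex.normSq (ε * (F z / z) + Complex.I * F (ε * Complex.I)) * z.im) (𝓝[>] 0)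
      (𝓝 (Complex.normSq (0 * (F z / z) + Complex.I * c) * z.im)) :=
    ((Complex.continuous_normSq.tendsto _).comp
      ((hε.mul_const _).add (hlim.const_mul _))).mul_const _
  have hr : Tendsto (fun ε : ℝ =>
      -(F z / z).im * (F (ε * Complex.I)).re * Complex.normSq (z - ε * Complex.I)) (𝓝[>] 0)
      (𝓝 (-(F z / z).im * (c : ℂ).re * Complex.normSq (z - 0 * Complex.I))) :=
    (((Complex.continuous_re.tendsto _).comp hlim).const_mul _).mul
      ((Complex.continuous_normSq.tendsto _).comp (tendsto_const_nhds.sub (hε.mul_const _)))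
  have hle := le_of_tendsto_of_tendsto hl hr (eventually_nhdsWithin_of_forall hpick)
  simp only [zero_mul, zero_add, Complex.normSq_mul, Complex.normSq_I, one_mul,
    Complex.normSq_ofReal, Complex.ofReal_re, sub_zero] at hle
  have hzz : 0 < Complex.normSq z := Complex.normSq_pos.mpr (hne z hz)
  have h6 : ((F z - F 0) / z).im = (F z / z).im + c * z.im / Complex.normSq z := by
    rw [sub_div, Complex.sub_im, hF0, Complex.div_im (c : ℂ)]
    simp
  rw [h6]
  rcases hc0.eq_or_lt with rfl | hcpos
  · simpa using him z hz
  · have h7 : c * z.im ≤ -(F z / z).im * Complex.normSq z := by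
      refine le_of_mul_le_mul_left ?_ hcpos
      linarith
    have h8 : c * z.im / Complex.normSq z ≤ -(F z / z).im := by
      rwa [div_le_iff₀ hzz]
    linarith

/-- A function holomorphic near `x`, real on the real axis, with nonpositive imaginary part in the
upper half-plane has nonpositive derivative at `x`. -/
theorem Complex.re_deriv_nonpos_of_im_nonpos {G : ℂ → ℂ} {G' : ℂ} {x : ℝ}
    (hG : HasDerivAt G G' x) (hx : (G x).im = 0)
    (him : ∀ z : ℂ, 0 < z.im → (G z).im ≤ 0) : G'.re ≤ 0 := by
  have h1 : HasDerivAt (fun t : ℝ => (x : ℂ) + t * Complex.I) Complex.I 0 := by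
    simpa using ((Complex.ofRealCLM.hasDerivAt (x := 0)).mul_const Complex.I).const_add (x : ℂ)
  have h2 : HasDerivAt (fun t : ℝ => G (x + t * Complex.I)) (Complex.I * G') 0 := by
    have : HasDerivAt G G' ((x : ℂ) + ((0 : ℝ) : ℂ) * Complex.I) := by simpa using hG
    exact this.scomp (0 : ℝ) h1
  have h3 : HasDerivAt (fun t : ℝ => (G (x + t * Complex.I)).im) G'.re 0 := by
    have := Complex.imCLM.hasFDerivAt.comp_hasDerivAt (0 : ℝ) h2
    simpa [Function.comp_def] using this
  have h4 := (hasDerivWithinAt_iff_tendsto_slope' self_notMem_Ioi).mp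
    (h3.hasDerivWithinAt (s := Ioi 0))
  refine le_of_tendsto h4 (eventually_nhdsWithin_of_forall fun t ht => ?_)
  have ht' : 0 < t := ht
  have h5 := him (x + t * Complex.I) (by simpa using ht')
  rw [slope_def_field]
  refine div_nonpos_of_nonpos_of_nonneg ?_ (by linarith)
  simpa [hx] using h5

end

section
open Set Filter Topology
open scoped Matrix.Norms.L2Operator ComplexOrder

variable {n : Type*} [Fintype n]

theorem im_star_dotProduct_self (v : n → ℂ) : (star v ⬝ᵥ v).im = 0 :=
  (Complex.nonneg_iff.mp (dotProduct_star_self_nonneg v)).2.symm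

theorem re_star_dotProduct_self_pos {v : n → ℂ} (hv : v ≠ 0) : 0 < (star v ⬝ᵥ v).re :=
  (Complex.pos_iff.mp (dotProduct_star_self_pos_iff.mpr hv)).1

/-- The imaginary part of a quadratic form, as a real continuous linear functional. -/
noncomputable def imForm (v : n → ℂ) : Matrix n n ℂ →L[ℝ] ℝ :=
  LinearMap.toContinuousLinearMap
    { toFun := fun a => (star v ⬝ᵥ a *ᵥ v).im
      map_add' := fun a b => by rw [add_mulVec, dotProduct_add, Complex.add_im]
      map_smul' := fun r a => by
        rw [smul_mulVec, dotProduct_smul, RingHom.id_apply, Complex.smul_im] }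

theorem imForm_apply (v : n → ℂ) (a : Matrix n n ℂ) : imForm v a = (star v ⬝ᵥ a *ᵥ v).im := rfl

variable [DecidableEq n]

theorem im_form_mul_inverse {a R : Matrix n n ℂ} {s : ℝ} (h : (1 + (s : ℂ) • (a - 1)) * R = 1)
    (v : n → ℂ) : (star v ⬝ᵥ ((a - 1) * R) *ᵥ v).im = (star (R *ᵥ v) ⬝ᵥ a *ᵥ (R *ᵥ v)).im := by
  have hv : v = R *ᵥ v + (s : ℂ) • ((a - 1) *ᵥ (R *ᵥ v)) := by
    conv_lhs => rw [← one_mulVec v, ← h]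
    rw [← mulVec_mulVec, add_mulVec, one_mulVec, smul_mulVec]
  rw [← mulVec_mulVec]
  generalize R *ᵥ v = w at hv ⊢
  have h1 : star v ⬝ᵥ (a - 1) *ᵥ w = star w ⬝ᵥ a *ᵥ w - star w ⬝ᵥ w +
      (s : ℂ) * (star ((a - 1) *ᵥ w) ⬝ᵥ (a - 1) *ᵥ w) := by
    conv_lhs => rw [hv]
    rw [star_add, add_dotProduct, star_smul, smul_dotProduct]
    congr 1
    · rw [sub_mulVec, one_mulVec, dotProduct_sub]
    · simp
  rw [h1, Complex.add_im, Complex.sub_im, Complex.im_ofReal_mul, im_star_dotProduct_self,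
    im_star_dotProduct_self]
  ring

theorem mul_imForm_segmentLog_nonneg {a : Matrix n n ℂ} (ha : SegmentUnit a) (σ : ℝ)
    (h : ∀ w, 0 ≤ σ * imForm w a) (v : n → ℂ) : 0 ≤ σ * imForm v (segmentLog a) := by
  have hint : IntervalIntegrable (fun s : ℝ => (a - 1) * Ring.inverse (1 + (s : ℂ) • (a - 1)))
      MeasureTheory.volume 0 1 :=
    (continuousOn_const.mul ha.continuousOn_inverse).intervalIntegrable
  rw [segmentLog, ← ContinuousLinearMap.intervalIntegral_comp_comm _ hint,
    ← intervalIntegral.integral_const_mul]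
  refine intervalIntegral.integral_nonneg zero_le_one fun s hs => ?_
  rw [imForm_apply, im_form_mul_inverse (Ring.mul_inverse_cancel _ (ha s (by simpa using hs)))]
  exact h _

theorem segmentUnit_of_re_pos {a : Matrix n n ℂ} {u : ℂ} (hu : 0 < u.re)
    (h : ∀ w ≠ 0, 0 < (u * (star w ⬝ᵥ a *ᵥ w)).re) : SegmentUnit a := by
  intro s hs
  rw [uIcc_of_le zero_le_one] at hs
  rw [← mulVec_injective_iff_isUnit, ← coe_mulVecLin, ← LinearMap.ker_eq_bot,
    LinearMap.ker_eq_bot']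
  intro w hw
  by_contra hne
  have h1 : (u * (star w ⬝ᵥ (1 + (s : ℂ) • (a - 1)) *ᵥ w)).re =
      (1 - s) * (u.re * (star w ⬝ᵥ w).re) + s * (u * (star w ⬝ᵥ a *ᵥ w)).re := by
    rw [add_mulVec, smul_mulVec, sub_mulVec, one_mulVec, dotProduct_add, dotProduct_smul,
      dotProduct_sub]
    simp [im_star_dotProduct_self]
    ring
  rw [mulVecLin_apply] at hw
  rw [hw] at h1
  have h2 := mul_pos hu (re_star_dotProduct_self_pos hne)
  have h3 := h w hne
  simp only [dotProduct_zero, mul_zero, Complex.zero_re] at h1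
  rcases hs.1.eq_or_lt with rfl | h0
  · rw [sub_zero, one_mul, zero_mul, add_zero] at h1; exact h2.ne h1
  · nlinarith [mul_pos h0 h3, mul_nonneg (sub_nonneg.mpr hs.2) h2.le]

theorem segmentUnit_rotation {P Q : Matrix n n ℂ} (hP : P.PosDef) (hQ : Q.PosSemidef) {r θ : ℝ}
    (hr : 0 ≤ r) (hθ : |θ| < Real.pi) {ψ : ℝ} (hψ : ψ ∈ uIcc 0 θ) :
    SegmentUnit (Complex.exp (-(ψ * Complex.I)) •
      (P + (r * Complex.exp (θ * Complex.I)) • Q)) := by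
  have hcos : ∀ t : ℝ, |t| ≤ |θ| / 2 → 0 < Real.cos t := fun t ht =>
    Real.cos_pos_of_mem_Ioo (abs_lt.mp (by linarith))
  refine segmentUnit_of_re_pos (u := Complex.exp ((ψ - θ / 2 : ℝ) * Complex.I)) ?_ fun w hw => ?_
  · rw [Complex.exp_ofReal_mul_I_re]
    refine hcos _ ?_
    rcases mem_uIcc.mp hψ with h | h
    · rw [abs_of_nonneg (h.1.trans h.2), abs_le]; constructor <;> linarith [h.1, h.2]
    · rw [abs_of_nonpos (h.1.trans h.2), abs_le]; constructor <;> linarith [h.1, h.2]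
  · obtain ⟨hp, hp'⟩ := Complex.pos_iff.mp (hP.dotProduct_mulVec_pos hw)
    obtain ⟨hq, hq'⟩ := Complex.nonneg_iff.mp (hQ.dotProduct_mulVec_nonneg w)
    rw [smul_mulVec, add_mulVec, smul_mulVec, dotProduct_smul, dotProduct_add, dotProduct_smul]
    have e : Complex.exp ((ψ - θ / 2 : ℝ) * Complex.I) • Complex.exp (-(ψ * Complex.I)) •
        (star w ⬝ᵥ P *ᵥ w + (r * Complex.exp (θ * Complex.I)) • (star w ⬝ᵥ Q *ᵥ w)) =
        Complex.exp ((-(θ / 2) : ℝ) * Complex.I) * (star w ⬝ᵥ P *ᵥ w) +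
        r * Complex.exp ((θ / 2 : ℝ) * Complex.I) * (star w ⬝ᵥ Q *ᵥ w) := by
      have e1 : Complex.exp ((ψ - θ / 2 : ℝ) * Complex.I) * Complex.exp (-(ψ * Complex.I)) =
          Complex.exp ((-(θ / 2) : ℝ) * Complex.I) := by
        rw [← Complex.exp_add]; congr 1; push_cast; ring
      have e2 : Complex.exp ((-(θ / 2) : ℝ) * Complex.I) * Complex.exp (θ * Complex.I) =
          Complex.exp ((θ / 2 : ℝ) * Complex.I) := by
        rw [← Complex.exp_add]; congr 1; push_cast; ring
      rw [smul_smul, e1, ← e2]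
      simp only [smul_eq_mul]
      ring
    rw [← smul_eq_mul, e, mul_assoc]
    have hc := hcos (θ / 2) (by rw [abs_div, abs_two])
    rw [Complex.add_re, Complex.re_ofReal_mul, Complex.mul_re, Complex.mul_re, ← hp', ← hq',
      Complex.exp_ofReal_mul_I_re, Complex.exp_ofReal_mul_I_re, Real.cos_neg]
    nlinarith [mul_pos hc hp, mul_nonneg hr (mul_nonneg hc.le hq)]

theorem segmentUnit_add_smul {P Q : Matrix n n ℂ} (hP : P.PosDef) (hQ : Q.PosSemidef) {r θ : ℝ}
    (hr : 0 ≤ r) (hθ : |θ| < Real.pi) :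
    SegmentUnit (P + (r * Complex.exp (θ * Complex.I)) • Q) := by
  simpa using segmentUnit_rotation hP hQ hr hθ (ψ := 0) (by simp)

theorem imForm_segmentLog_bounds {P Q : Matrix n n ℂ} (hP : P.PosDef) (hQ : Q.PosSemidef)
    {r θ σ : ℝ} (hr : 0 ≤ r) (hθ : |θ| < Real.pi) (hσ : 0 ≤ σ * Real.sin θ) (v : n → ℂ) :
    0 ≤ σ * imForm v (segmentLog (P + (r * Complex.exp (θ * Complex.I)) • Q)) ∧
    0 ≤ σ * (θ * (star v ⬝ᵥ v).re -
      imForm v (segmentLog (P + (r * Complex.exp (θ * Complex.I)) • Q))) := by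
  constructor
  · refine mul_imForm_segmentLog_nonneg (segmentUnit_add_smul hP hQ hr hθ) σ (fun w => ?_) v
    have hp' := (Complex.nonneg_iff.mp (hP.posSemidef.dotProduct_mulVec_nonneg w)).2
    obtain ⟨hq, hq'⟩ := Complex.nonneg_iff.mp (hQ.dotProduct_mulVec_nonneg w)
    rw [imForm_apply, add_mulVec, smul_mulVec, dotProduct_add, dotProduct_smul, smul_eq_mul,
      mul_assoc, Complex.add_im, Complex.im_ofReal_mul, Complex.mul_im, ← hp', ← hq',
      Complex.exp_ofReal_mul_I_im]
    nlinarith [mul_nonneg hσ (mul_nonneg hr hq)]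
  · have hrot := segmentLog_eq_add_rotation (P + (r * Complex.exp (θ * Complex.I)) • Q) θ
      fun ψ hψ => segmentUnit_rotation hP hQ hr hθ hψ
    have := mul_imForm_segmentLog_nonneg
      (segmentUnit_rotation hP hQ hr hθ (right_mem_uIcc (a := 0) (b := θ))) (-σ) (fun w => ?_) v
    · rw [hrot, map_add]
      have h1 : imForm v ((θ * Complex.I) • (1 : Matrix n n ℂ)) = θ * (star v ⬝ᵥ v).re := by
        rw [imForm_apply, smul_mulVec, one_mulVec, dotProduct_smul, smul_eq_mul, mul_assoc,
          Complex.im_ofReal_mul, Complex.I_mul_im]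
      rw [h1]
      linarith
    · obtain ⟨hp, hp'⟩ := Complex.nonneg_iff.mp (hP.posSemidef.dotProduct_mulVec_nonneg w)
      have hq' := (Complex.nonneg_iff.mp (hQ.dotProduct_mulVec_nonneg w)).2
      have e : Complex.exp (-(θ * Complex.I)) •
          (P + (r * Complex.exp (θ * Complex.I)) • Q) =
          Complex.exp ((-θ : ℝ) * Complex.I) • P + (r : ℂ) • Q := by
        rw [smul_add, smul_smul, mul_left_comm, ← Complex.exp_add]
        simp
      rw [e, imForm_apply, add_mulVec, smul_mulVec, smul_mulVec, dotProduct_add, dotProduct_smul,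
        dotProduct_smul, smul_eq_mul, smul_eq_mul, Complex.add_im, Complex.im_ofReal_mul,
        Complex.mul_im, ← hp', ← hq', Complex.exp_ofReal_mul_I_im, Real.sin_neg]
      nlinarith [mul_nonneg hσ hp]

end

section
open Set Filter Topology
open scoped Matrix.Norms.L2Operator ComplexOrder Nat

variable {n : Type*} [Fintype n] [DecidableEq n]

theorem exp_mulVec_of_eigenvector {G : Matrix n n ℂ} {v : n → ℂ} {l : ℂ} (h : G *ᵥ v = l • v) :
    NormedSpace.exp G *ᵥ v = Complex.exp l • v := by
  have hpow : ∀ k : ℕ, (G ^ k) *ᵥ v = l ^ k • v := by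
    intro k
    induction k with
    | zero => simp
    | succ k ih => rw [pow_succ, ← mulVec_mulVec, h, mulVec_smul, ih, smul_smul, ← pow_succ']
  have h1 := NormedSpace.exp_series_hasSum_exp' (𝕂 := ℂ) G
  have h2 := h1.map ((mulVecBilin ℂ ℂ).flip v) (LinearMap.continuous_of_finiteDimensional _)
  have h3 := (NormedSpace.exp_series_hasSum_exp' (𝕂 := ℂ) l).smul_const v
  rw [← Complex.exp_eq_exp_ℂ] at h3
  refine h2.unique (h3.congr_fun fun k => ?_)
  show ((k !⁻¹ : ℂ) • G ^ k) *ᵥ v = _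
  rw [smul_mulVec, hpow, smul_assoc]

theorem exists_eigenvector_of_mem_spectrum_exp {G : Matrix n n ℂ} {μ : ℂ}
    (h : μ ∈ spectrum ℂ (NormedSpace.exp G)) :
    ∃ (l : ℂ) (v : n → ℂ), v ≠ 0 ∧ G *ᵥ v = l • v ∧ μ = Complex.exp l := by
  rw [← Matrix.spectrum_toLin', ← Module.End.hasEigenvalue_iff_mem_spectrum] at h
  have hc : Commute (toLin' (NormedSpace.exp G)) (toLin' G) := by
    have : Commute (NormedSpace.exp G) G := (Commute.refl G).exp_left
    rw [Commute, SemiconjBy, Module.End.mul_eq_comp, Module.End.mul_eq_comp, ← toLin'_mul,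
      ← toLin'_mul, this.eq]
  have hm : ∀ x ∈ Module.End.eigenspace (toLin' (NormedSpace.exp G)) μ,
      toLin' G x ∈ Module.End.eigenspace (toLin' (NormedSpace.exp G)) μ :=
    Module.End.mapsTo_genEigenspace_of_comm hc μ 1
  have : Nontrivial (Module.End.eigenspace (toLin' (NormedSpace.exp G)) μ) :=
    Submodule.nontrivial_iff_ne_bot.mpr h
  obtain ⟨l, hl⟩ := Module.End.exists_eigenvalue ((toLin' G).restrict hm)
  obtain ⟨⟨v, hv⟩, hv1, hv0⟩ := hl.exists_hasEigenvector
  have hne : v ≠ 0 := fun h0 => hv0 (by simpa using h0)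
  have hG : G *ᵥ v = l • v := by
    simpa using congrArg Subtype.val (Module.End.mem_eigenspace_iff.mp hv1)
  refine ⟨l, v, hne, hG, ?_⟩
  have h1 : NormedSpace.exp G *ᵥ v = μ • v := by
    simpa using Module.End.mem_eigenspace_iff.mp hv
  rw [exp_mulVec_of_eigenvector hG] at h1
  exact (smul_left_injective ℂ hne h1).symm

theorem im_trace_exp_div_nonpos {G : Matrix n n ℂ} {r θ : ℝ} (hr : 0 ≤ r)
    (hlow : ∀ v, (θ - Real.pi) * (star v ⬝ᵥ v).re ≤ imForm v G)
    (hupp : ∀ v, imForm v G ≤ θ * (star v ⬝ᵥ v).re) :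
    ((NormedSpace.exp G).trace / (r * Complex.exp (θ * Complex.I))).im ≤ 0 := by
  have hsum : ∀ (S : Multiset ℂ) (c : ℂ), (S.sum / c).im = (S.map fun x => (x / c).im).sum := by
    intro S c
    induction S using Multiset.induction with
    | empty => simp
    | cons a S ih => simp only [Multiset.sum_cons, Multiset.map_cons, add_div, Complex.add_im, ih]
  rw [trace_eq_sum_roots_charpoly, hsum]
  refine Multiset.sum_induction (· ≤ 0) _ (fun _ _ => add_nonpos) le_rfl fun x hx => ?_
  obtain ⟨μ, hμ, rfl⟩ := Multiset.mem_map.mp hx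
  obtain ⟨l, v, hv, hG, rfl⟩ := exists_eigenvector_of_mem_spectrum_exp
    (mem_spectrum_of_isRoot_charpoly (Polynomial.isRoot_of_mem_roots hμ))
  have hN := re_star_dotProduct_self_pos hv
  have him : imForm v G = l.im * (star v ⬝ᵥ v).re := by
    rw [imForm_apply, hG, dotProduct_smul, smul_eq_mul, Complex.mul_im, im_star_dotProduct_self]
    ring
  have h1 : θ - Real.pi ≤ l.im := le_of_mul_le_mul_right (him ▸ hlow v) hN
  have h2 : l.im ≤ θ := le_of_mul_le_mul_right (him ▸ hupp v) hN
  have e : Complex.exp l / (r * Complex.exp (θ * Complex.I)) =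
      (r⁻¹ : ℝ) * Complex.exp (l - θ * Complex.I) := by
    rw [Complex.exp_sub]
    push_cast
    rw [mul_comm (r : ℂ), ← div_div, div_eq_inv_mul _ (r : ℂ)]
  have hsin := Real.sin_nonpos_of_nonpos_of_neg_pi_le (x := l.im - θ) (by linarith) (by linarith)
  show (Complex.exp l / (r * Complex.exp (θ * Complex.I))).im ≤ 0
  rw [e, Complex.im_ofReal_mul, Complex.exp_im]
  refine mul_nonpos_of_nonneg_of_nonpos (inv_nonneg.mpr hr)
    (mul_nonpos_of_nonneg_of_nonpos (Real.exp_pos _).le ?_)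
  simpa using hsin

/-- The complex extension of `z ↦ tr exp (L + log (P₁ + z K₁) + log (P₂ - z K₂))`. -/
noncomputable def traceExpLog (L P₁ P₂ K₁ K₂ : Matrix n n ℂ) (z : ℂ) : ℂ :=
  (NormedSpace.exp (L + segmentLog (P₁ + z • K₁) + segmentLog (P₂ + (-z) • K₂))).trace

theorem im_traceExpLog_div_nonpos {L P₁ P₂ K₁ K₂ : Matrix n n ℂ} (hL : L.IsHermitian)
    (hP₁ : P₁.PosDef) (hP₂ : P₂.PosDef) (hK₁ : K₁.PosSemidef) (hK₂ : K₂.PosSemidef) {z : ℂ}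
    (hz : 0 < z.im) : (traceExpLog L P₁ P₂ K₁ K₂ z / z).im ≤ 0 := by
  have hL' : ∀ v, imForm v L = 0 := fun v => hL.im_star_dotProduct_mulVec_self v
  have hpi : 0 < z.arg ∧ z.arg < Real.pi := by
    refine ⟨(Complex.arg_nonneg_iff.mpr hz.le).lt_of_ne' fun h => ?_,
      Complex.arg_lt_pi_iff.mpr (Or.inr hz.ne')⟩
    exact hz.ne' (Complex.arg_eq_zero_iff.mp h).2
  have e1 := (Complex.norm_mul_exp_arg_mul_I z).symm
  have e2 := (Complex.norm_mul_exp_arg_mul_I (-z)).symm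
  rw [Complex.arg_neg_eq_arg_sub_pi_of_im_pos hz] at e2
  have hs := Real.sin_pos_of_pos_of_lt_pi hpi.1 hpi.2
  have b1 := fun v => imForm_segmentLog_bounds hP₁ hK₁ (norm_nonneg z)
    (abs_lt.mpr ⟨by linarith, hpi.2⟩) (σ := 1) (by linarith) v
  have b2 := fun v => imForm_segmentLog_bounds hP₂ hK₂ (norm_nonneg (-z)) (θ := z.arg - Real.pi)
    (abs_lt.mpr ⟨by linarith, by linarith⟩) (σ := -1) (by rw [Real.sin_sub_pi]; linarith) v
  rw [← e1] at b1
  rw [← e2] at b2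
  nth_rw 2 [e1]
  refine im_trace_exp_div_nonpos (norm_nonneg z) (fun v => ?_) (fun v => ?_)
  all_goals
    rw [map_add, map_add, hL' v]
    linarith [b1 v, b2 v]

theorem differentiableAt_traceExpLog {L P₁ P₂ K₁ K₂ : Matrix n n ℂ} {z : ℂ}
    (h₁ : SegmentUnit (P₁ + z • K₁)) (h₂ : SegmentUnit (P₂ + (-z) • K₂)) :
    DifferentiableAt ℂ (traceExpLog L P₁ P₂ K₁ K₂) z := by
  have d1 := (hasDerivAt_segmentLog P₁ K₁ z h₁).differentiableAt
  have d2 : DifferentiableAt ℂ (fun w : ℂ => segmentLog (P₂ + (-w) • K₂)) z :=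
    DifferentiableAt.comp (g := fun w : ℂ => segmentLog (P₂ + w • K₂)) z
      (hasDerivAt_segmentLog P₂ K₂ (-z) h₂).differentiableAt differentiableAt_id.neg
  have d3 := ((differentiableAt_const L).add d1).add d2
  have d4 := (NormedSpace.exp_analytic (𝕂 := ℂ)
    (L + segmentLog (P₁ + z • K₁) + segmentLog (P₂ + (-z) • K₂))).differentiableAt
  have d5 := DifferentiableAt.comp z d4 d3
  exact (LinearMap.toContinuousLinearMap (traceLinearMap n ℂ ℂ)).differentiableAt.comp z d5
end

section
open Set Filter Topology

theorem concaveOn_of_im_slope_nonpos {a b : ℝ} {F : ℂ → ℂ} {f : ℝ → ℝ}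
    (hFf : ∀ x ∈ Ioo a b, F x = f x) (hd : ∀ x ∈ Ioo a b, DifferentiableAt ℂ F x)
    (him : ∀ x ∈ Ioo a b, ∀ z : ℂ, 0 < z.im → ((F z - F x) / (z - x)).im ≤ 0) :
    ConcaveOn ℝ (Ioo a b) f := by
  refine concaveOn_of_slope_anti_adjacent (convex_Ioo a b) fun {x y z} hx hz hxy hyz => ?_
  have hreal : ∀ t ∈ Ioo a b, (F t - F x) / (t - x) = ((f t - f x) / (t - x) : ℝ) := by
    intro t ht
    rw [hFf t ht, hFf x hx]
    push_cast
    rfl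
  have hsub : Icc y z ⊆ Ioo a b := fun t ht => ⟨hx.1.trans (hxy.trans_le ht.1), ht.2.trans_lt hz.2⟩
  have hderiv : ∀ t ∈ Icc y z, HasDerivAt (fun w : ℂ => (F w - F x) / (w - x))
      (deriv (fun w : ℂ => (F w - F x) / (w - x)) t) t := by
    intro t ht
    refine DifferentiableAt.hasDerivAt (DifferentiableAt.div ((hd t (hsub ht)).sub_const _)
      (differentiableAt_id.sub_const _) ?_)
    rw [sub_ne_zero]
    exact_mod_cast (hxy.trans_le ht.1).ne'
  have hanti : AntitoneOn (fun t : ℝ => ((F t - F x) / (t - x)).re) (Icc y z) := by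
    refine antitoneOn_of_hasDerivWithinAt_nonpos (convex_Icc y z)
      (fun t ht => (hderiv t ht).real_of_complex.continuousAt.continuousWithinAt)
      (fun t ht => (hderiv t (interior_subset ht)).real_of_complex.hasDerivWithinAt)
      fun t ht => ?_
    have ht' := interior_subset ht
    refine Complex.re_deriv_nonpos_of_im_nonpos (hderiv t ht') ?_ (him x hx)
    rw [hreal t (hsub ht')]
    exact Complex.ofReal_im _
  have h1 := hanti (left_mem_Icc.mpr hyz.le) (right_mem_Icc.mpr hyz.le) hyz.le
  simp only [hreal y (hsub (left_mem_Icc.mpr hyz.le)), hreal z hz, Complex.ofReal_re] at h1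
  rw [div_le_div_iff₀ (by linarith) (by linarith)] at h1 ⊢
  linarith

end

section
open Set Filter Topology
open scoped Matrix.Norms.L2Operator ComplexOrder

variable {n : Type*} [Fintype n]

theorem eventually_posDef_add_smul {C Q : Matrix n n ℝ} (hC : C.PosDef) (hQ : Q.IsHermitian) :
    ∀ᶠ x in 𝓝 (0 : ℝ), (C + x • Q).PosDef := by
  have h : ∀ᶠ x in 𝓝 (0 : ℝ), ∀ v ∈ Metric.sphere (0 : n → ℝ) 1,
      0 < star v ⬝ᵥ (C + x • Q) *ᵥ v := by
    refine (isCompact_sphere (0 : n → ℝ) 1).eventually_forall_of_forall_eventually fun v hv => ?_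
    have hc : Continuous fun p : ℝ × (n → ℝ) => star p.2 ⬝ᵥ (C + p.1 • Q) *ᵥ p.2 := by fun_prop
    refine hc.continuousAt.eventually (lt_mem_nhds ?_)
    have hv0 : v ≠ 0 := by
      rintro rfl
      simp at hv
    simpa using hC.dotProduct_mulVec_pos hv0
  filter_upwards [h] with x hx
  refine .of_dotProduct_mulVec_pos (hC.isHermitian.add ?_) fun v hv => ?_
  · rw [IsHermitian, conjTranspose_smul, hQ.eq, star_trivial]
  · have hv' := norm_pos_iff.mpr hv
    have h1 := hx (‖v‖⁻¹ • v) (by simp [norm_smul, hv'.ne'])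
    rw [mulVec_smul, dotProduct_smul, star_smul, smul_dotProduct, star_trivial, smul_eq_mul,
      smul_eq_mul] at h1
    exact pos_of_mul_pos_right (pos_of_mul_pos_right h1 (by positivity)) (by positivity)

variable [DecidableEq n]

theorem Matrix.PosSemidef.mapMatrix_ofReal {A : Matrix n n ℝ} (hA : A.PosSemidef) :
    (Complex.ofRealHom.mapMatrix A).PosSemidef := by
  open scoped MatrixOrder in
  obtain ⟨B, rfl⟩ := CStarAlgebra.nonneg_iff_eq_star_mul_self.mp hA.nonneg
  have : Complex.ofRealHom.mapMatrix (star B) = (Complex.ofRealHom.mapMatrix B)ᴴ := by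
    ext i j
    simp [star_apply]
  rw [map_mul, this]
  exact posSemidef_conjTranspose_mul_self _

theorem Matrix.PosDef.mapMatrix_ofReal {A : Matrix n n ℝ} (hA : A.PosDef) :
    (Complex.ofRealHom.mapMatrix A).PosDef :=
  hA.posSemidef.mapMatrix_ofReal.posDef_iff_isUnit.mpr (hA.isUnit.map _)

theorem Matrix.IsHermitian.mapMatrix_ofReal {A : Matrix n n ℝ} (hA : A.IsHermitian) :
    (Complex.ofRealHom.mapMatrix A).IsHermitian :=
  hA.map _ fun x => by simp

theorem mapMatrix_diagonal_ofReal (w : n → ℝ) :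
    Complex.ofRealHom.mapMatrix (diagonal w) = diagonal fun i => (w i : ℂ) := by
  simp [diagonal_map]

theorem mapMatrix_add_smul_ofReal (A B : Matrix n n ℝ) (x : ℝ) :
    Complex.ofRealHom.mapMatrix (A + x • B) =
      Complex.ofRealHom.mapMatrix A + (x : ℂ) • Complex.ofRealHom.mapMatrix B := by
  ext i j
  simp

theorem trace_mapMatrix_ofReal (A : Matrix n n ℝ) :
    (Complex.ofRealHom.mapMatrix A).trace = (A.trace : ℂ) := by
  simp [trace]

theorem Matrix.PosDef.segmentUnit {A : Matrix n n ℂ} (hA : A.PosDef) : SegmentUnit A :=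
  segmentUnit_of_re_pos (u := 1) (by simp) fun w hw => by
    simpa using (Complex.pos_iff.mp (hA.dotProduct_mulVec_pos hw)).1

/-- The logarithm of a diagonalized matrix with positive eigenvalues. -/
theorem segmentLog_conj_diagonal {U W : Matrix n n ℂ} (hUW : U * W = 1) (hWU : W * U = 1)
    {w : n → ℝ} (hw : ∀ i, 0 < w i) :
    segmentLog (U * diagonal (fun i => (w i : ℂ)) * W) =
      U * diagonal (fun i => (Real.log (w i) : ℂ)) * W := by
  have hconj : ∀ p q : n → ℂ, U * diagonal p * W * (U * diagonal q * W) =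
      U * diagonal (fun i => p i * q i) * W := by
    intro p q
    rw [← diagonal_mul_diagonal]
    simp only [mul_assoc]
    rw [← mul_assoc W U, hWU, one_mul]
  have hsub : U * diagonal (fun i => (w i : ℂ)) * W - 1 =
      U * diagonal (fun i => (w i : ℂ) - 1) * W := by
    have : (diagonal fun i => (w i : ℂ) - 1) = diagonal (fun i => (w i : ℂ)) - 1 := by
      rw [← diagonal_one, diagonal_sub]
    rw [this, mul_sub, sub_mul, mul_one, hUW]
  have hpos : ∀ s ∈ uIcc (0 : ℝ) 1, ∀ i, 0 < 1 + s * (w i - 1) := by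
    intro s hs i
    rw [uIcc_of_le zero_le_one] at hs
    rcases hs.1.eq_or_lt with rfl | h0
    · simp
    · nlinarith [mul_pos h0 (hw i), hs.2]
  have hone : ∀ s : ℝ, 1 + (s : ℂ) • (U * diagonal (fun i => (w i : ℂ)) * W - 1) =
      U * diagonal (fun i => (1 + s * (w i - 1) : ℂ)) * W := by
    intro s
    have : (diagonal fun i => (1 + s * (w i - 1) : ℂ)) =
        1 + (s : ℂ) • diagonal (fun i => (w i : ℂ) - 1) := by
      rw [← diagonal_one, ← diagonal_smul, diagonal_add]
      rfl
    rw [hsub, this, mul_add, add_mul, mul_one, hUW, mul_smul_comm, smul_mul_assoc]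
  have hmul : ∀ s ∈ uIcc (0 : ℝ) 1, U * diagonal (fun i => (1 + s * (w i - 1) : ℂ)) * W *
      (U * diagonal (fun i => ((1 + s * (w i - 1))⁻¹ : ℂ)) * W) = 1 := by
    intro s hs
    have hne : ∀ i, (1 + s * (w i - 1) : ℂ) ≠ 0 := fun i => by
      exact_mod_cast (hpos s hs i).ne'
    rw [hconj]
    simp only [mul_inv_cancel₀ (hne _), diagonal_one, mul_one, hUW]
  have hder : ∀ s ∈ uIcc (0 : ℝ) 1, HasDerivAt
      (fun s : ℝ => U * diagonal (fun i => (Real.log (1 + s * (w i - 1)) : ℂ)) * W)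
      ((U * diagonal (fun i => (w i : ℂ)) * W - 1) *
        Ring.inverse (1 + (s : ℂ) • (U * diagonal (fun i => (w i : ℂ)) * W - 1))) s := by
    intro s hs
    rw [hone, ← nonsing_inv_eq_ringInverse, inv_eq_right_inv (hmul s hs), hsub, hconj]
    have h1 : HasDerivAt (fun s : ℝ => fun i => (Real.log (1 + s * (w i - 1)) : ℂ))
        (fun i => ((w i : ℂ) - 1) * (1 + (s : ℂ) * ((w i : ℂ) - 1))⁻¹) s := by
      refine hasDerivAt_pi.mpr fun i => ?_
      have := ((((hasDerivAt_id s).mul_const (w i - 1)).const_add 1).log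
        (hpos s hs i).ne').ofReal_comp
      refine this.congr_deriv ?_
      simp [div_eq_mul_inv]
    have h2 : HasDerivAt (fun s : ℝ => diagonal (fun i => (Real.log (1 + s * (w i - 1)) : ℂ)))
        (diagonal (fun i => ((w i : ℂ) - 1) * (1 + (s : ℂ) * ((w i : ℂ) - 1))⁻¹)) s :=
      ((LinearMap.toContinuousLinearMap
        (diagonalLinearMap n ℝ ℂ)).hasFDerivAt).comp_hasDerivAt s h1
    exact ((h2.const_mul U).mul_const W)
  have hunit : SegmentUnit (U * diagonal (fun i => (w i : ℂ)) * W) := fun s hs => by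
    rw [hone]
    exact IsUnit.of_mul_eq_one _ (hmul s hs)
  rw [segmentLog, intervalIntegral.integral_eq_sub_of_hasDerivAt hder
    (continuousOn_const.mul hunit.continuousOn_inverse).intervalIntegrable]
  simp

end

theorem exists_matFun_eq {d : ℕ} {A : Matrix (Fin d) (Fin d) ℝ} (hA : A.IsHermitian) :
    ∃ U : Matrix (Fin d) (Fin d) ℝ, U * star U = 1 ∧ star U * U = 1 ∧
      A = U * diagonal hA.eigenvalues * star U ∧
      ∀ f : ℝ → ℝ, matFun f A = U * diagonal (fun i => f (hA.eigenvalues i)) * star U :=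
  ⟨hA.eigenvectorUnitary, Unitary.coe_mul_star_self _, Unitary.coe_star_mul_self _, by
    simpa [Unitary.conjStarAlgAut_apply, Function.comp_def] using hA.spectral_theorem,
    fun f => by rw [matFun, dif_pos hA]⟩

section
open scoped Matrix.Norms.L2Operator
variable {d : ℕ} {A : Matrix (Fin d) (Fin d) ℝ}

theorem isHermitian_matFun (f : ℝ → ℝ) (hA : A.IsHermitian) : (matFun f A).IsHermitian := by
  obtain ⟨U, -, -, -, hf⟩ := exists_matFun_eq hA
  rw [hf f]
  exact isHermitian_mul_mul_conjTranspose U (isHermitian_diagonal _)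

theorem trace_matExp_nonneg (hA : A.IsHermitian) : 0 ≤ (matExp A).trace := by
  obtain ⟨U, -, hU, -, hf⟩ := exists_matFun_eq hA
  rw [matExp, hf, trace_mul_comm, ← mul_assoc, hU, one_mul, trace_diagonal]
  exact Finset.sum_nonneg fun i _ => (Real.exp_pos _).le

theorem segmentLog_mapMatrix (hA : A.PosDef) :
    segmentLog (Complex.ofRealHom.mapMatrix A) = Complex.ofRealHom.mapMatrix (matLog A) := by
  obtain ⟨U, hU1, hU2, hA', hf⟩ := exists_matFun_eq hA.isHermitian
  rw [matLog, hf]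
  conv_lhs => rw [hA']
  simp only [map_mul, mapMatrix_diagonal_ofReal]
  exact segmentLog_conj_diagonal (by rw [← map_mul, hU1, map_one])
    (by rw [← map_mul, hU2, map_one]) hA.eigenvalues_pos

theorem exp_mapMatrix (hA : A.IsHermitian) :
    NormedSpace.exp (Complex.ofRealHom.mapMatrix A) = Complex.ofRealHom.mapMatrix (matExp A) := by
  obtain ⟨U, hU1, hU2, hA', hf⟩ := exists_matFun_eq hA
  rw [matExp, hf]
  conv_lhs => rw [hA']
  simp only [map_mul, mapMatrix_diagonal_ofReal]
  have h1 : Complex.ofRealHom.mapMatrix U * Complex.ofRealHom.mapMatrix (star U) = 1 := by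
    rw [← map_mul, hU1, map_one]
  rw [← inv_eq_right_inv h1, exp_conj _ _ (IsUnit.of_mul_eq_one _ h1), exp_diagonal]
  congr 3
  ext i
  simp [Pi.coe_exp, Complex.exp_eq_exp_ℂ]
end

section
open Set Filter Topology
open scoped Matrix.Norms.L2Operator ComplexOrder

variable {n : Type*} [Fintype n] [DecidableEq n]

theorem traceExpLog_add (L P₁ P₂ K₁ K₂ : Matrix n n ℂ) (z w : ℂ) :
    traceExpLog L P₁ P₂ K₁ K₂ (z + w) =
      traceExpLog L (P₁ + z • K₁) (P₂ + (-z) • K₂) K₁ K₂ w := by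
  simp only [traceExpLog, neg_add, add_smul, add_assoc]

theorem differentiableAt_traceExpLog_of_im_pos {L P₁ P₂ K₁ K₂ : Matrix n n ℂ}
    (hP₁ : P₁.PosDef) (hP₂ : P₂.PosDef) (hK₁ : K₁.PosSemidef) (hK₂ : K₂.PosSemidef) {z : ℂ}
    (hz : z.im ≠ 0) : DifferentiableAt ℂ (traceExpLog L P₁ P₂ K₁ K₂) z := by
  have key : ∀ (w : ℂ) {P K : Matrix n n ℂ}, P.PosDef → K.PosSemidef → w.im ≠ 0 →
      SegmentUnit (P + w • K) := by
    intro w P K hP hK hw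
    rw [← Complex.norm_mul_exp_arg_mul_I w]
    exact segmentUnit_add_smul hP hK (norm_nonneg w)
      (abs_lt.mpr ⟨Complex.neg_pi_lt_arg w, Complex.arg_lt_pi_iff.mpr (Or.inr hw)⟩)
  exact differentiableAt_traceExpLog (key z hP₁ hK₁ hz) (key (-z) hP₂ hK₂ (by simpa using hz))

theorem im_slope_traceExpLog_nonpos {L P₁ P₂ K₁ K₂ : Matrix n n ℂ} (hL : L.IsHermitian)
    (hP₁ : P₁.PosDef) (hP₂ : P₂.PosDef) (hK₁ : K₁.PosSemidef) (hK₂ : K₂.PosSemidef) {c : ℝ}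
    (hc : 0 ≤ c) (h0 : traceExpLog L P₁ P₂ K₁ K₂ 0 = c) {z : ℂ} (hz : 0 < z.im) :
    ((traceExpLog L P₁ P₂ K₁ K₂ z - traceExpLog L P₁ P₂ K₁ K₂ 0) / z).im ≤ 0 := by
  refine Complex.im_sub_div_nonpos (fun w hw =>
    (differentiableAt_traceExpLog_of_im_pos hP₁ hP₂ hK₁ hK₂ (ne_of_gt hw)).differentiableWithinAt)
    (fun w hw => im_traceExpLog_div_nonpos hL hP₁ hP₂ hK₁ hK₂ hw) ?_ hc h0 hz
  exact (differentiableAt_traceExpLog (by simpa using hP₁.segmentUnit)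
    (by simpa using hP₂.segmentUnit)).continuousAt
end

theorem traceExpLog_zero_mapMatrix {d : ℕ} {L P₁ P₂ : Matrix (Fin d) (Fin d) ℝ}
    (hL : L.IsHermitian) (hP₁ : P₁.PosDef) (hP₂ : P₂.PosDef) (K₁ K₂ : Matrix (Fin d) (Fin d) ℂ) :
    traceExpLog (Complex.ofRealHom.mapMatrix L) (Complex.ofRealHom.mapMatrix P₁)
      (Complex.ofRealHom.mapMatrix P₂) K₁ K₂ 0 =
      ((matExp (L + matLog P₁ + matLog P₂)).trace : ℂ) := by
  rw [traceExpLog, neg_zero, zero_smul, zero_smul, add_zero, add_zero, segmentLog_mapMatrix hP₁,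
    segmentLog_mapMatrix hP₂, ← map_add, ← map_add, exp_mapMatrix, trace_mapMatrix_ofReal]
  exact (hL.add (isHermitian_matFun _ hP₁.isHermitian)).add (isHermitian_matFun _ hP₂.isHermitian)

/-- generalized Lieb concavity: for symmetric `L`, positive definite `C₁, C₂`
and positive semidefinite `K₁, K₂`, the map
`z ↦ tr exp(L + log(C₁ + z K₁) + log(C₂ − z K₂))` is concave on a neighborhood `(−η, η)`
of `0`. -/
theorem lieb_concavity_generalization {d : ℕ} (L C₁ C₂ K₁ K₂ : Matrix (Fin d) (Fin d) ℝ)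
    (hL : L.IsSymm) (hC₁ : C₁.PosDef) (hC₂ : C₂.PosDef)
    (hK₁ : K₁.PosSemidef) (hK₂ : K₂.PosSemidef) :
    ∃ η : ℝ, 0 < η ∧
      ConcaveOn ℝ (Set.Ioo (-η) η)
        (fun z : ℝ =>
          (matExp (L + matLog (C₁ + z • K₁) + matLog (C₂ - z • K₂))).trace) := by
  have hL' : L.IsHermitian := by rwa [IsHermitian, conjTranspose_eq_transpose_of_trivial]
  obtain ⟨η, hη, hpos⟩ := Metric.eventually_nhds_iff.mp
    ((eventually_posDef_add_smul hC₁ hK₁.isHermitian).and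
      (eventually_posDef_add_smul hC₂ hK₂.isHermitian.neg))
  refine ⟨η, hη, ?_⟩
  have hP : ∀ x ∈ Set.Ioo (-η) η, (C₁ + x • K₁).PosDef ∧ (C₂ - x • K₂).PosDef := by
    intro x hx
    have := hpos (y := x) (by simpa [abs_lt] using hx)
    rwa [smul_neg, ← sub_eq_add_neg] at this
  set F := traceExpLog (Complex.ofRealHom.mapMatrix L) (Complex.ofRealHom.mapMatrix C₁)
    (Complex.ofRealHom.mapMatrix C₂) (Complex.ofRealHom.mapMatrix K₁)
    (Complex.ofRealHom.mapMatrix K₂) with hF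
  have hshift : ∀ (x : ℝ) (w : ℂ), F (x + w) = traceExpLog (Complex.ofRealHom.mapMatrix L)
      (Complex.ofRealHom.mapMatrix (C₁ + x • K₁)) (Complex.ofRealHom.mapMatrix (C₂ - x • K₂))
      (Complex.ofRealHom.mapMatrix K₁) (Complex.ofRealHom.mapMatrix K₂) w := by
    intro x w
    rw [hF, traceExpLog_add, sub_eq_add_neg, ← neg_smul, mapMatrix_add_smul_ofReal,
      mapMatrix_add_smul_ofReal, Complex.ofReal_neg]
  have hval : ∀ x ∈ Set.Ioo (-η) η,
      F x = ((matExp (L + matLog (C₁ + x • K₁) + matLog (C₂ - x • K₂))).trace : ℂ) := by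
    intro x hx
    rw [← add_zero (x : ℂ), hshift, traceExpLog_zero_mapMatrix hL' (hP x hx).1 (hP x hx).2]
  refine concaveOn_of_im_slope_nonpos hval (fun x hx => ?_) fun x hx z hz => ?_
  · refine differentiableAt_traceExpLog ?_ ?_
    · rw [← mapMatrix_add_smul_ofReal]
      exact (hP x hx).1.mapMatrix_ofReal.segmentUnit
    · rw [← Complex.ofReal_neg, ← mapMatrix_add_smul_ofReal, neg_smul, ← sub_eq_add_neg]
      exact (hP x hx).2.mapMatrix_ofReal.segmentUnit
  · obtain ⟨w, rfl⟩ : ∃ w, z = x + w := ⟨z - x, by ring⟩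
    have hx0 := hshift x 0
    rw [add_zero] at hx0
    rw [add_sub_cancel_left, hshift, hx0]
    refine im_slope_traceExpLog_nonpos hL'.mapMatrix_ofReal (hP x hx).1.mapMatrix_ofReal
      (hP x hx).2.mapMatrix_ofReal hK₁.mapMatrix_ofReal hK₂.mapMatrix_ofReal
      (trace_matExp_nonneg ?_) (hx0.symm.trans (hval x hx)) (by simpa using hz)
    exact (hL'.add (isHermitian_matFun _ (hP x hx).1.isHermitian)).add
      (isHermitian_matFun _ (hP x hx).2.isHermitian)
end
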